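/- Let A be an n×n real skew-symmetric matrix. Then A lies in the Euclidean closure of S_n^{>0} in the space of n×n real matrices if and only if there exists ε₀ > 0 such that for all ε with 0 < ε < ε₀, writing [Y₁(ε) | Y₂(ε)] := [Id_n | A]·Z(ε) (an n×2n matrix split into two n×n blocks), the matrix Y₁(ε) is invertible and Y₁(ε)⁻¹·Y₂(ε) ∈ S_n^{>0}. -/

import Mathlib

noncomputable section

open Matrix

/-- `N = n(n-1)/2`, the number of parameters. -/
def Npar (n : ℕ) : ℕ := n * (n - 1) / 2

/-- The decreasing run `a, a-1, …, b` (empty if `b > a`). -/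
def decRun (a b : ℕ) : List ℕ := (List.range' b (a + 1 - b)).reverse

/-- The index sequence `(i_1, …, i_N)`: for `m = 1, …, ⌊n/2⌋` (here `m` is 0-based, so
`m+1` is the 1-based block index), concatenate `n`, the run `n-2, …, 2(m+1)-1`, and the
run `n-1, …, 2(m+1)`. -/
def wordD (n : ℕ) : List ℕ :=
  ((List.range (n / 2)).map (fun m =>
    n :: (decRun (n - 2) (2 * m + 1) ++ decRun (n - 1) (2 * m + 2)))).flatten

/-- The matrix `x_i(t)` (index `i` is 1-based, matrix positions are 1-based in the paper,
0-based here). -/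
def xMat (n : ℕ) (i : ℕ) (t : ℝ) : Matrix (Fin (2 * n)) (Fin (2 * n)) ℝ :=
  Matrix.of fun p q =>
    (if (p : ℕ) = (q : ℕ) then 1 else 0) +
    (if i < n then
        (if (p : ℕ) + 1 = i ∧ (q : ℕ) + 1 = i + 1 then t else 0)
      + (if (p : ℕ) + 1 = n + i + 1 ∧ (q : ℕ) + 1 = n + i then -t else 0)
     else
        (if (p : ℕ) + 1 = n - 1 ∧ (q : ℕ) + 1 = 2 * n then t else 0)
      + (if (p : ℕ) + 1 = n ∧ (q : ℕ) + 1 = 2 * n - 1 then -t else 0))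

/-- The product `x_{i_1}(t_1) ⋯ x_{i_N}(t_N)`; the parameter `t l` plays the role of
`t_{l+1}`. -/
def prodX (n : ℕ) (t : ℕ → ℝ) : Matrix (Fin (2 * n)) (Fin (2 * n)) ℝ :=
  ((List.range (Npar n)).map (fun l => xMat n ((wordD n).getD l 0) (t l))).prod

/-- The first block `X₁(t)` of the first `n` rows of the product. -/
def X1 (n : ℕ) (t : ℕ → ℝ) : Matrix (Fin n) (Fin n) ℝ :=
  Matrix.of fun p q =>
    prodX n t ⟨(p : ℕ), by have := p.isLt; omega⟩ ⟨(q : ℕ), by have := q.isLt; omega⟩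

/-- The second block `X₂(t)` of the first `n` rows of the product. -/
def X2 (n : ℕ) (t : ℕ → ℝ) : Matrix (Fin n) (Fin n) ℝ :=
  Matrix.of fun p q =>
    prodX n t ⟨(p : ℕ), by have := p.isLt; omega⟩ ⟨n + (q : ℕ), by have := q.isLt; omega⟩

/-- The skew-symmetric matrix `A(t) = X₁(t)⁻¹ · X₂(t)`. -/
def Amat (n : ℕ) (t : ℕ → ℝ) : Matrix (Fin n) (Fin n) ℝ := (X1 n t)⁻¹ * X2 n t

/-- The set `S_n^{>0}` of totally positive skew-symmetric matrices. -/
def Spos (n : ℕ) : Set (Matrix (Fin n) (Fin n) ℝ) :=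
  { A | ∃ t : ℕ → ℝ, (∀ i < Npar n, 0 < t i) ∧ A = Amat n t }

/-- The signed minor `M_{j,k}(A)`: `(-1)^{jk}` times the determinant of the submatrix of `A`
with (1-based) rows `{1,…,n-k-1} ∪ {n-k+j,…,n}` and columns `{1,…,n-j}`. -/
def Mminor (n j k : ℕ) (A : Matrix (Fin n) (Fin n) ℝ) : ℝ :=
  (-1 : ℝ) ^ (j * k) *
    Matrix.det (Matrix.of fun (p q : Fin (n - j)) =>
      A (if (p : ℕ) < n - k - 1
          then ⟨(p : ℕ), by have := p.isLt; omega⟩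
          else ⟨(p : ℕ) + j, by have := p.isLt; omega⟩)
        ⟨(q : ℕ), by have := q.isLt; omega⟩)

/-- The Pfaffian of an `m × m` matrix (intended for `m` even):
`Pf(B) = (1/(2^{m/2} (m/2)!)) Σ_σ sgn(σ) Π_i B_{σ(2i-1), σ(2i)}`. -/
def Pfaff {m : ℕ} (B : Matrix (Fin m) (Fin m) ℝ) : ℝ :=
  (1 / ((2 : ℝ) ^ (m / 2) * (Nat.factorial (m / 2) : ℝ))) *
    ∑ σ : Equiv.Perm (Fin m), ((Equiv.Perm.sign σ : ℤ) : ℝ) *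
      ∏ i : Fin (m / 2),
        B (σ ⟨2 * (i : ℕ), by have := i.isLt; omega⟩)
          (σ ⟨2 * (i : ℕ) + 1, by have := i.isLt; omega⟩)

/-- `Pf_I(A)`: the Pfaffian of the submatrix of `A` with rows and columns indexed by `I`
in increasing order. -/
def PfI {n : ℕ} (A : Matrix (Fin n) (Fin n) ℝ) (I : Finset (Fin n)) : ℝ :=
  Pfaff (Matrix.of fun (p q : Fin I.card) =>
    A ((I.orderIsoOfFin rfl p : Fin n)) ((I.orderIsoOfFin rfl q : Fin n)))

/-- `sgn(I,[n]) = (-1)^{(Σ_{i∈I} i) - |I|(|I|+1)/2}` (the elements of `I` are 1-based, so a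
0-based element `i` contributes `i+1`; the natural subtraction agrees with the integer one
since the sum of `|I|` distinct positive integers is at least `|I|(|I|+1)/2`). -/
def sgnSet {n : ℕ} (I : Finset (Fin n)) : ℝ :=
  (-1 : ℝ) ^ ((∑ i ∈ I, ((i : ℕ) + 1)) - I.card * (I.card + 1) / 2)

/-- The block matrix `[Id_n | A]`. -/
def IdA {n : ℕ} (A : Matrix (Fin n) (Fin n) ℝ) : Matrix (Fin n) (Fin (2 * n)) ℝ :=
  Matrix.of fun p q =>
    if h : (q : ℕ) < n then (if (p : ℕ) = (q : ℕ) then 1 else 0)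
    else A p ⟨(q : ℕ) - n, by have := q.isLt; omega⟩

/-- The full word `(j_1, …, j_{2N})`: `1, 2,1, 3,2,1, …, n-1,…,1` followed by `(i_1,…,i_N)`. -/
def wordFull (n : ℕ) : List ℕ :=
  (((List.range n).map (fun r => decRun r 1)).flatten) ++ wordD n

/-- `z(ε) = x_{j_1}(ε) ⋯ x_{j_{2N}}(ε)`. -/
def zeps (n : ℕ) (ε : ℝ) : Matrix (Fin (2 * n)) (Fin (2 * n)) ℝ :=
  ((wordFull n).map (fun i => xMat n i ε)).prod

/-- `Z(ε) = z(ε)ᵀ · z(ε)`. -/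
def Zeps (n : ℕ) (ε : ℝ) : Matrix (Fin (2 * n)) (Fin (2 * n)) ℝ :=
  (zeps n ε)ᵀ * zeps n ε

/-- First block `Y₁(ε)` of `[Id_n | A] · Z(ε)`. -/
def Y1 {n : ℕ} (A : Matrix (Fin n) (Fin n) ℝ) (ε : ℝ) : Matrix (Fin n) (Fin n) ℝ :=
  Matrix.of fun p q => (IdA A * Zeps n ε) p ⟨(q : ℕ), by have := q.isLt; omega⟩

/-- Second block `Y₂(ε)` of `[Id_n | A] · Z(ε)`. -/
def Y2 {n : ℕ} (A : Matrix (Fin n) (Fin n) ℝ) (ε : ℝ) : Matrix (Fin n) (Fin n) ℝ :=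
  Matrix.of fun p q => (IdA A * Zeps n ε) p ⟨n + (q : ℕ), by have := q.isLt; omega⟩

/-- The simple generators `s_i` of the Weyl group `W` of `SO(2n)`, as permutations of
`{1,…,2n}` (0-based here): for `1 ≤ i ≤ n-1`, `s_i = (i,i+1)(n+i,n+i+1)`; for `i = n`,
`s_n = (n,2n-1)(n-1,2n)`. -/
def sGen (n : ℕ) (i : ℕ) : Equiv.Perm (Fin (2 * n)) :=
  if h : 1 ≤ i ∧ i ≤ n - 1 ∧ 2 ≤ n then
    Equiv.swap ⟨i - 1, by omega⟩ ⟨i, by omega⟩ *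
      Equiv.swap ⟨n + i - 1, by omega⟩ ⟨n + i, by omega⟩
  else if h2 : i = n ∧ 2 ≤ n then
    Equiv.swap ⟨n - 1, by omega⟩ ⟨2 * n - 2, by omega⟩ *
      Equiv.swap ⟨n - 2, by omega⟩ ⟨2 * n - 1, by omega⟩
  else 1

/-- Membership in the Weyl group `W`: `σ(n+i) ≡ n + σ(i) (mod 2n)` for all `1 ≤ i ≤ n`,
and the number of `i ∈ {1,…,n}` with `σ(i) > n` is even. (All positions are 0-based; a
0-based value `v` corresponds to the 1-based value `v+1`.) -/
def inW (n : ℕ) (σ : Equiv.Perm (Fin (2 * n))) : Prop :=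
  (∀ i : Fin n,
    ((σ ⟨n + (i : ℕ), by have := i.isLt; omega⟩ : Fin (2 * n)) : ℕ)
      ≡ n + ((σ ⟨(i : ℕ), by have := i.isLt; omega⟩ : Fin (2 * n)) : ℕ) [MOD 2 * n]) ∧
  Even (Finset.univ.filter (fun i : Fin n =>
    n ≤ ((σ ⟨(i : ℕ), by have := i.isLt; omega⟩ : Fin (2 * n)) : ℕ))).card

/-- `I_w = {i ∈ {1,…,n} : w(i) > n}`, as a finset of `Fin n` (0-based). -/
def Iset (n : ℕ) (σ : Equiv.Perm (Fin (2 * n))) : Finset (Fin n) :=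
  Finset.univ.filter (fun i : Fin n =>
    n ≤ ((σ ⟨(i : ℕ), by have := i.isLt; omega⟩ : Fin (2 * n)) : ℕ))

/-- The parabolic subgroup `W_{[n-1]}` generated by `s_1, …, s_{n-1}`. -/
def Wpar (n : ℕ) : Subgroup (Equiv.Perm (Fin (2 * n))) :=
  Subgroup.closure { σ | ∃ i, 1 ≤ i ∧ i ≤ n - 1 ∧ σ = sGen n i }

/-- The standard basis vector `e_i` of `ℝ^{2n}` (with `i : Fin n` 0-based, sitting in
position `i` of the first block). -/
def evec (n : ℕ) (i : Fin n) : Fin (2 * n) → ℝ :=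
  Pi.single ⟨(i : ℕ), by have := i.isLt; omega⟩ 1

/-- The standard basis vector `f_j` of `ℝ^{2n}` (position `n + j`). -/
def fvec (n : ℕ) (j : Fin n) : Fin (2 * n) → ℝ :=
  Pi.single ⟨n + (j : ℕ), by have := j.isLt; omega⟩ 1

/-- `f = ι(f_1)⋯ι(f_n)` in the Clifford algebra. -/
def fElt {n : ℕ} (Q : QuadraticForm ℝ (Fin (2 * n) → ℝ)) : CliffordAlgebra Q :=
  (List.ofFn (fun j : Fin n => CliffordAlgebra.ι Q (fvec n j))).prod

/-- `e_S = ι(e_{l_1})⋯ι(e_{l_s})` where `l_1 < ⋯ < l_s` enumerates `S`. -/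
def eProd {n : ℕ} (Q : QuadraticForm ℝ (Fin (2 * n) → ℝ)) (S : Finset (Fin n)) :
    CliffordAlgebra Q :=
  ((S.sort (· ≤ ·)).map (fun l => CliffordAlgebra.ι Q (evec n l))).prod

/-- `h = Π_{i=1}^n ι(e_i + Σ_j A_{ij} f_j)` (product in increasing order of `i`). -/
def hElt {n : ℕ} (Q : QuadraticForm ℝ (Fin (2 * n) → ℝ)) (A : Matrix (Fin n) (Fin n) ℝ) :
    CliffordAlgebra Q :=
  (List.ofFn (fun i : Fin n =>
    CliffordAlgebra.ι Q (evec n i + ∑ j : Fin n, A i j • fvec n j))).prod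

/-- The sorted list of the (1-based) elements of `S ⊆ {1,…,n}`. -/
def valsOf {n : ℕ} (S : Finset (Fin n)) : List ℕ :=
  (S.sort (· ≤ ·)).map (fun i => (i : ℕ) + 1)

/-- The word `w_1 w_2 ⋯ w_r` where
`w_m = s_n (s_{n-2}⋯s_{i_{2m-1}}) (s_{n-1}⋯s_{i_{2m}})` and `vals` lists `i_1 < i_2 < ⋯`
(1-based); `m` is 0-based here. -/
def uWord (n r : ℕ) (vals : List ℕ) : List ℕ :=
  ((List.range r).map (fun m =>
    n :: (decRun (n - 2) (vals.getD (2 * m) 0) ++ decRun (n - 1) (vals.getD (2 * m + 1) 0)))).flatten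

/-- The permutation `u = w_1 w_2 ⋯ w_r`. -/
def uPerm (n r : ℕ) (vals : List ℕ) : Equiv.Perm (Fin (2 * n)) :=
  ((uWord n r vals).map (sGen n)).prod

/-- `L = r + Σ_{m=1}^{r} ((n-1-i_{2m-1}) + (n-i_{2m}))`. -/
def Lval (n r : ℕ) (vals : List ℕ) : ℕ :=
  r + ∑ m ∈ Finset.range r, ((n - 1 - vals.getD (2 * m) 0) + (n - vals.getD (2 * m + 1) 0))

/-!
The point `A` is represented by the row space of `[Id | A]`, and `A ∈ S_n^{>0}` means that this is
the row space of the first `n` rows of a product `u` of letters `x_i(t)`, `t > 0`, along the full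
word. Indeed the staircase part of the word preserves the span of the first `n` coordinate rows.

If `ε → 0` then `Z(ε) → Id`, hence `Y₁(ε)⁻¹ Y₂(ε) → A`, which gives one implication.

Conversely, let `A` be in the closure and `ε > 0`. For `u` as above, pushing the lower triangular
factor `z(ε)ᵀ` to the left through `u`, by the exchange relation of `SL₂`, gives
`u z(ε)ᵀ = p g`, where `p` preserves the span of the first `n` coordinate rows and `g` is a product
along the same word. The parameters of `g` are bounded in terms of `ε` only, because
`a / (1 + a ε) ≤ ε⁻¹`. So `[Id | A'] z(ε)ᵀ`, for `A' ∈ S_n^{>0}`, has the row space of the first `n`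
rows of some `g` in a fixed compact set; this is a closed condition, so it holds for `A` as well.
Finally `g z(ε)` is again a product of letters with positive parameters along the full word: the
sets `{x_i(t) | t > 0}` satisfy the relations of the 0-Hecke monoid of type `D_n`, in which the full
word represents the longest element and absorbs every generator.
-/

/-! ### The 0-Hecke monoid of type `D` -/

/-- The edges `i — j` with `i < j` of the Dynkin diagram of type `D_n`, for `1 ≤ i`: the chain
`1 — 2 — ⋯ — n-1`, with the node `n` attached to `n-2`. -/
def DynkinDEdge (n i j : ℕ) : Prop := i + 1 = j ∧ j < n ∨ i + 2 = n ∧ j = n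

/-- The elements `p 1, …, p n` of a monoid satisfy the relations of the 0-Hecke monoid of type
`D_n`: they are idempotent and satisfy the braid relations of the Dynkin diagram. -/
structure IsZeroHeckeD {M : Type*} [Monoid M] (n : ℕ) (p : ℕ → M) : Prop where
  idem : ∀ i, 1 ≤ i → i ≤ n → p i * p i = p i
  commute : ∀ i j, 1 ≤ i → i < j → j ≤ n → ¬DynkinDEdge n i j → Commute (p i) (p j)
  braid : ∀ i j, 1 ≤ i → DynkinDEdge n i j → p i * p j * p i = p j * p i * p j

section ZeroHecke

variable {M : Type*} [Monoid M]

/-- The product `p a * p (a - 1) * ⋯ * p b` along a decreasing run. -/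
def descProd (p : ℕ → M) (a b : ℕ) : M := ((decRun a b).map p).prod

/-- The product along the block `n, n-2, …, c, n-1, …, c+1` of `wordD n`. -/
def blockProd (n : ℕ) (p : ℕ → M) (c : ℕ) : M :=
  p n * descProd p (n - 2) c * descProd p (n - 1) (c + 1)

/-- The product along the first `r` blocks of `wordD n`. -/
def blocksProd (n : ℕ) (p : ℕ → M) (r : ℕ) : M :=
  ((List.range r).map fun m => blockProd n p (2 * m + 1)).prod

/-- The product along the staircase word `1, 2, 1, …, s-1, …, 1`. -/
def staircaseProd (p : ℕ → M) (s : ℕ) : M :=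
  ((List.range s).map fun r => descProd p r 1).prod

lemma descProd_of_lt (p : ℕ → M) {a b : ℕ} (h : a < b) : descProd p a b = 1 := by
  simp [descProd, decRun, show a + 1 - b = 0 by omega]

lemma descProd_succ_left (p : ℕ → M) {a b : ℕ} (h : b ≤ a + 1) :
    descProd p (a + 1) b = p (a + 1) * descProd p a b := by
  simp [descProd, decRun, show a + 1 + 1 - b = (a + 1 - b) + 1 by omega, List.range'_concat,
    show b + (a + 1 - b) = a + 1 by omega]

lemma descProd_eq_mul_right (p : ℕ → M) {a b : ℕ} (h : b ≤ a) :
    descProd p a b = descProd p a (b + 1) * p b := by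
  simp [descProd, decRun, show a + 1 - b = (a + 1 - (b + 1)) + 1 by omega, List.range'_succ]

lemma blocksProd_succ (n : ℕ) (p : ℕ → M) (r : ℕ) :
    blocksProd n p (r + 1) = blocksProd n p r * blockProd n p (2 * r + 1) := by
  simp [blocksProd, List.range_succ]

lemma staircaseProd_succ (p : ℕ → M) (r : ℕ) :
    staircaseProd p (r + 1) = staircaseProd p r * descProd p r 1 := by
  simp [staircaseProd, List.range_succ]

lemma commute_descProd {p : ℕ → M} {x : M} {a b : ℕ}
    (h : ∀ k, b ≤ k → k ≤ a → Commute (p k) x) : Commute (descProd p a b) x := by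
  refine Commute.list_prod_left _ _ fun y hy => ?_
  simp only [decRun, List.map_reverse, List.mem_reverse, List.mem_map, List.mem_range'_1] at hy
  obtain ⟨k, hk, rfl⟩ := hy
  exact h k hk.1 (by omega)

lemma prod_map_wordD (n : ℕ) (p : ℕ → M) :
    ((wordD n).map p).prod = blocksProd n p (n / 2) := by
  simp [wordD, blocksProd, blockProd, descProd, List.map_flatten, List.prod_flatten,
    Function.comp_def, mul_assoc]

lemma prod_map_wordFull (n : ℕ) (p : ℕ → M) :
    ((wordFull n).map p).prod = staircaseProd p n * blocksProd n p (n / 2) := by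
  rw [wordFull, List.map_append, List.prod_append, prod_map_wordD]
  simp [staircaseProd, descProd, List.map_flatten, List.prod_flatten, Function.comp_def]

lemma list_prod_mul_eq_right {l : List M} {x : M} (h : ∀ y ∈ l, y * x = x) : l.prod * x = x := by
  induction l with
  | nil => simp
  | cons a l ih =>
    rw [List.prod_cons, mul_assoc, ih fun y hy => h y (by simp [hy]), h a (by simp)]

lemma mul_list_prod_eq_left {l : List M} {x : M} (h : ∀ y ∈ l, x * y = x) : x * l.prod = x := by
  induction l with
  | nil => simp
  | cons a l ih =>
    rw [List.prod_cons, ← mul_assoc, h a (by simp), ih fun y hy => h y (by simp [hy])]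

end ZeroHecke

lemma mem_wordD {n i : ℕ} (h : i ∈ wordD n) : 1 ≤ i ∧ i ≤ n := by
  simp only [wordD, decRun, List.mem_flatten, List.mem_map, List.mem_range] at h
  obtain ⟨l, ⟨m, hm, rfl⟩, hi⟩ := h
  simp only [List.mem_cons, List.mem_append, List.mem_reverse, List.mem_range'_1] at hi
  omega

lemma mem_staircase {n i : ℕ} (h : i ∈ ((List.range n).map fun r => decRun r 1).flatten) :
    1 ≤ i ∧ i < n := by
  simp only [decRun, List.mem_flatten, List.mem_map, List.mem_range] at h
  obtain ⟨l, ⟨m, hm, rfl⟩, hi⟩ := h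
  simp only [List.mem_reverse, List.mem_range'_1] at hi
  omega

lemma mem_wordFull {n i : ℕ} (h : i ∈ wordFull n) : 1 ≤ i ∧ i ≤ n := by
  rcases List.mem_append.1 h with h | h
  · exact ⟨(mem_staircase h).1, (mem_staircase h).2.le⟩
  · exact mem_wordD h

namespace IsZeroHeckeD

variable {M : Type*} [Monoid M] {n : ℕ} {p : ℕ → M} (hp : IsZeroHeckeD n p)
include hp

lemma commute_of_add_two_le {i j : ℕ} (hi : 1 ≤ i) (hij : i + 2 ≤ j) (hj : j < n) :
    Commute (p i) (p j) :=
  hp.commute i j hi (by omega) hj.le (by rintro (h | h) <;> omega)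

lemma commute_last {i : ℕ} (hi : 1 ≤ i) (hin : i < n) (h : i + 2 ≠ n) : Commute (p i) (p n) :=
  hp.commute i n hi hin le_rfl (by rintro (h | h) <;> omega)

/-! Moving a generator from right to left through a product of generators changes its index; the
`SemiconjBy` lemmas keep track of it. -/

lemma semiconjBy_descProd {a b k : ℕ} (hb : 1 ≤ b) (hbk : b < k) (hka : k ≤ a) (han : a < n) :
    SemiconjBy (descProd p a b) (p k) (p (k - 1)) := by
  induction a with
  | zero => omega
  | succ a ih =>
    rw [descProd_succ_left p (by omega)]
    rcases Nat.lt_or_ge a k with h | h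
    · obtain ⟨a, rfl⟩ : ∃ a', a = a' + 1 := ⟨a - 1, by omega⟩
      obtain rfl : k = a + 1 + 1 := by omega
      have hbraid : SemiconjBy (p (a + 1 + 1) * p (a + 1)) (p (a + 1 + 1)) (p (a + 1)) := by
        rw [SemiconjBy, ← hp.braid (a + 1) _ (by omega) (.inl ⟨rfl, han⟩), mul_assoc]
      rw [descProd_succ_left p (by omega), ← mul_assoc]
      exact hbraid.mul_left <| commute_descProd fun k _ _ =>
        hp.commute_of_add_two_le (by omega) (by omega) (by omega)
    · exact SemiconjBy.mul_left
        (hp.commute_of_add_two_le (by omega) (by omega) han).symm (ih h (by omega))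

lemma descProd_mul_self {a b : ℕ} (hb : 1 ≤ b) (hba : b ≤ a) (han : a < n) :
    descProd p a b * p b = descProd p a b := by
  rw [descProd_eq_mul_right p hba, mul_assoc, hp.idem b hb (by omega)]

lemma semiconjBy_descProd_descProd {a c m : ℕ} (hc : 1 ≤ c) (hma : m < a) (han : a < n) :
    SemiconjBy (descProd p a c) (descProd p (m + 1) (c + 1)) (descProd p m c) := by
  induction m with
  | zero =>
    rw [descProd_of_lt p (show 0 + 1 < c + 1 by omega), descProd_of_lt p (show 0 < c by omega)]
    exact SemiconjBy.one_right _
  | succ m ih =>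
    rcases Nat.lt_or_ge (m + 1) c with h | h
    · rw [descProd_of_lt p (Nat.succ_lt_succ h), descProd_of_lt p h]
      exact SemiconjBy.one_right _
    · rw [descProd_succ_left p (by omega), descProd_succ_left p h]
      exact (hp.semiconjBy_descProd hc (by omega) hma han).mul_right (ih (by omega))

lemma semiconjBy_blockProd {c k : ℕ} (hc : 1 ≤ c) (hck : c + 2 ≤ k) (hkn : k < n) :
    SemiconjBy (blockProd n p c) (p k) (p (k - 2)) :=
  SemiconjBy.mul_left
    (SemiconjBy.mul_left (hp.commute_last (by omega) (by omega) (by omega)).symm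
      (hp.semiconjBy_descProd (k := k - 1) hc (by omega) (by omega) (by omega)))
    (hp.semiconjBy_descProd (by omega) (by omega) (by omega) (by omega))

lemma commute_blockProd {c k : ℕ} (hk : 1 ≤ k) (hkc : k + 2 ≤ c) (hcn : c < n) :
    Commute (blockProd n p c) (p k) :=
  ((hp.commute_last hk (by omega) (by omega)).symm.mul_left
    (commute_descProd fun _ _ _ =>
      (hp.commute_of_add_two_le hk (by omega) (by omega)).symm)).mul_left
    (commute_descProd fun _ _ _ => (hp.commute_of_add_two_le hk (by omega) (by omega)).symm)

lemma semiconjBy_blockProd_self {c : ℕ} (hc : 1 ≤ c) (hcn : c < n) :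
    SemiconjBy (blockProd n p c) (p c) (p (n - 1)) := by
  obtain ⟨q, rfl⟩ : ∃ q, n = q + 2 := ⟨n - 2, by omega⟩
  have hcomm : Commute (p (q + 1)) (p (q + 2)) := hp.commute_last (by omega) (by omega) (by omega)
  simp only [SemiconjBy, blockProd, show q + 2 - 2 = q by omega, show q + 2 - 1 = q + 1 by omega]
  calc p (q + 2) * descProd p q c * descProd p (q + 1) (c + 1) * p c
      = p (q + 2) * (descProd p q c * descProd p (q + 1) c) := by
        rw [descProd_eq_mul_right p (show c ≤ q + 1 by omega)]; simp only [mul_assoc]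
    _ = p (q + 2) * (descProd p (q + 1) c * descProd p (q + 1) (c + 1)) := by
        rw [(hp.semiconjBy_descProd_descProd hc (Nat.lt_succ_self q) (by omega)).eq]
    _ = p (q + 2) * p (q + 1) * descProd p q c * descProd p (q + 1) (c + 1) := by
        rw [descProd_succ_left p (a := q) (b := c) (by omega)]; simp only [mul_assoc]
    _ = p (q + 1) * (p (q + 2) * descProd p q c * descProd p (q + 1) (c + 1)) := by
        rw [← hcomm.eq]; simp only [mul_assoc]

lemma semiconjBy_last_mul_descProd {c : ℕ} (hc : 1 ≤ c) (hcn : c + 2 ≤ n) :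
    SemiconjBy (p n * descProd p (n - 2) c) (p n) (p (n - 2)) := by
  obtain ⟨q, rfl⟩ : ∃ q, n = q + 3 := ⟨n - 3, by omega⟩
  have hbraid : SemiconjBy (p (q + 3) * p (q + 1)) (p (q + 3)) (p (q + 1)) := by
    rw [SemiconjBy, ← hp.braid (q + 1) _ (by omega) (.inr ⟨rfl, rfl⟩), mul_assoc]
  rw [show q + 3 - 2 = q + 1 by omega, descProd_succ_left p (by omega), ← mul_assoc]
  exact hbraid.mul_left <| commute_descProd fun k _ _ =>
    hp.commute_last (by omega) (by omega) (by omega)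

lemma descProd_mul_last_mul_descProd {c : ℕ} (hc : 1 ≤ c) (hcn : c + 2 ≤ n) :
    descProd p (n - 2) c * p n * descProd p (n - 2) c =
      p n * descProd p (n - 2) c * p n * descProd p (n - 2) (c + 1) := by
  have hlast := (hp.semiconjBy_last_mul_descProd hc hcn).eq
  obtain ⟨q, rfl⟩ : ∃ q, n = q + 3 := ⟨n - 3, by omega⟩
  rw [show q + 3 - 2 = q + 1 by omega] at hlast ⊢
  have hcomm : Commute (descProd p q c) (p (q + 3)) := commute_descProd fun k _ _ =>
    hp.commute_last (by omega) (by omega) (by omega)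
  calc descProd p (q + 1) c * p (q + 3) * descProd p (q + 1) c
      = p (q + 1) * (descProd p q c * p (q + 3)) * descProd p (q + 1) c := by
        rw [descProd_succ_left p (by omega)]; simp only [mul_assoc]
    _ = p (q + 1) * p (q + 3) * (descProd p q c * descProd p (q + 1) c) := by
        rw [hcomm.eq]; simp only [mul_assoc]
    _ = p (q + 1) * p (q + 3) * (descProd p (q + 1) c * descProd p (q + 1) (c + 1)) := by
        rw [(hp.semiconjBy_descProd_descProd hc (Nat.lt_succ_self q) (by omega)).eq]
    _ = p (q + 3) * descProd p (q + 1) c * p (q + 3) * descProd p (q + 1) (c + 1) := by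
        rw [hlast]; simp only [mul_assoc]

lemma semiconjBy_blockProd_mul_blockProd {c : ℕ} (hc : 1 ≤ c) (hcn : c + 2 < n) :
    SemiconjBy (blockProd n p c * blockProd n p (c + 2)) (p (c + 1)) (p (n - 2)) := by
  have hlast := (hp.semiconjBy_last_mul_descProd hc hcn.le).eq
  have hdbl := hp.descProd_mul_last_mul_descProd (c := c + 1) (by omega) (by omega)
  obtain ⟨q, rfl⟩ : ∃ q, n = q + 3 := ⟨n - 3, by omega⟩
  simp only [SemiconjBy, blockProd, show q + 3 - 2 = q + 1 by omega,
    show q + 3 - 1 = q + 2 by omega] at hlast hdbl ⊢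
  have hcomm : Commute (descProd p (q + 2) (c + 3)) (p (c + 1)) := commute_descProd fun _ _ _ =>
    (hp.commute_of_add_two_le (by omega) (by omega) (by omega)).symm
  have hcomm_last : Commute (p (q + 2)) (p (q + 3)) :=
    hp.commute_last (by omega) (by omega) (by omega)
  have hmid : descProd p (q + 2) (c + 1) = p (q + 2) * descProd p (q + 1) (c + 1) :=
    descProd_succ_left p (by omega)
  calc p (q + 3) * descProd p (q + 1) c * descProd p (q + 2) (c + 1) *
        (p (q + 3) * descProd p (q + 1) (c + 2) * descProd p (q + 2) (c + 3)) * p (c + 1)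
      = p (q + 3) * descProd p (q + 1) c * p (q + 2) *
          (descProd p (q + 1) (c + 1) * p (q + 3) * descProd p (q + 1) (c + 1)) *
          descProd p (q + 2) (c + 3) := by
        rw [mul_assoc _ _ (p (c + 1)), mul_assoc _ _ (p (c + 1)), hcomm.eq, hmid,
          descProd_eq_mul_right p (show c + 1 ≤ q + 1 by omega)]
        simp only [mul_assoc]
    _ = p (q + 3) * descProd p (q + 1) c * (p (q + 2) * p (q + 3)) *
          (descProd p (q + 1) (c + 1) * p (q + 3) * descProd p (q + 1) (c + 2)) *
          descProd p (q + 2) (c + 3) := by rw [hdbl]; simp only [mul_assoc]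
    _ = p (q + 3) * descProd p (q + 1) c * p (q + 3) * descProd p (q + 2) (c + 1) *
          (p (q + 3) * descProd p (q + 1) (c + 2) * descProd p (q + 2) (c + 3)) := by
        rw [hcomm_last.eq, hmid]; simp only [mul_assoc]
    _ = _ := by rw [hlast]; simp only [mul_assoc]

lemma semiconjBy_blocksProd {r k : ℕ} (hrk : 2 * r + 1 ≤ k) (hkn : k < n) :
    SemiconjBy (blocksProd n p r) (p k) (p (k - 2 * r)) := by
  induction r generalizing k with
  | zero => simp [blocksProd, SemiconjBy]
  | succ r ih =>
    rw [blocksProd_succ, show k - 2 * (r + 1) = k - 2 - 2 * r by omega]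
    exact (ih (by omega) (by omega)).mul_left
      (hp.semiconjBy_blockProd (by omega) (by omega) hkn)

lemma semiconjBy_blocksProd_of_le {x : M} {r s k : ℕ} (hk : 1 ≤ k) (hkr : k + 1 ≤ 2 * r)
    (hrs : r ≤ s) (hsn : 2 * s ≤ n) (h : SemiconjBy (blocksProd n p r) (p k) x) :
    SemiconjBy (blocksProd n p s) (p k) x := by
  induction s, hrs using Nat.le_induction with
  | base => exact h
  | succ s hrs ih =>
    rw [blocksProd_succ]
    exact (ih (by omega)).mul_left (hp.commute_blockProd hk (by omega) (by omega))

lemma semiconjBy_blocksProd_odd {r : ℕ} (hr : 2 * r + 1 < n) :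
    SemiconjBy (blocksProd n p (n / 2)) (p (2 * r + 1)) (p (n - 1 - 2 * r)) := by
  refine hp.semiconjBy_blocksProd_of_le (r := r + 1) (by omega) (by omega) (by omega) (by omega) ?_
  rw [blocksProd_succ]
  exact (hp.semiconjBy_blocksProd (by omega) (by omega)).mul_left
    (hp.semiconjBy_blockProd_self (by omega) hr)

lemma semiconjBy_blocksProd_even {r : ℕ} (hr : 2 * r + 3 < n) :
    SemiconjBy (blocksProd n p (n / 2)) (p (2 * r + 2)) (p (n - 2 - 2 * r)) := by
  refine hp.semiconjBy_blocksProd_of_le (r := r + 2) (by omega) (by omega) (by omega) (by omega) ?_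
  rw [blocksProd_succ, blocksProd_succ, mul_assoc]
  exact (hp.semiconjBy_blocksProd (by omega) (by omega)).mul_left
    (hp.semiconjBy_blockProd_mul_blockProd (by omega) (by omega))

lemma semiconjBy_blocksProd_last_of_odd {r : ℕ} (hr : n = 2 * r + 3) :
    SemiconjBy (blocksProd n p (n / 2)) (p n) (p 1) := by
  have hblock : SemiconjBy (blockProd n p (2 * r + 1)) (p n) (p (n - 2)) :=
    (hp.semiconjBy_last_mul_descProd (by omega) (by omega)).mul_left <|
      commute_descProd fun k _ _ => hp.commute_last (by omega) (by omega) (by omega)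
  rw [show n / 2 = r + 1 by omega, blocksProd_succ]
  have hblocks := hp.semiconjBy_blocksProd (r := r) (k := n - 2) (by omega) (by omega)
  rw [show n - 2 - 2 * r = 1 by omega] at hblocks
  exact hblocks.mul_left hblock

lemma blocksProd_mul_pred_of_odd {r : ℕ} (hr : n = 2 * r + 3) :
    blocksProd n p (n / 2) * p (n - 1) = blocksProd n p (n / 2) := by
  rw [show n / 2 = r + 1 by omega, blocksProd_succ, blockProd, show 2 * r + 1 + 1 = n - 1 by omega,
    mul_assoc, mul_assoc, hp.descProd_mul_self (by omega) le_rfl (by omega)]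

lemma blocksProd_mul_last_of_even {r : ℕ} (hr : n = 2 * r + 2) :
    blocksProd n p (n / 2) * p n = blocksProd n p (n / 2) := by
  rw [show n / 2 = r + 1 by omega, blocksProd_succ, blockProd, descProd_of_lt p (by omega),
    descProd_of_lt p (by omega), mul_one, mul_one, mul_assoc, hp.idem n (by omega) le_rfl]

lemma blocksProd_mul_eq_or_semiconjBy (hn : 2 ≤ n) {i : ℕ} (hi : 1 ≤ i) (hin : i ≤ n) :
    blocksProd n p (n / 2) * p i = blocksProd n p (n / 2) ∨
      ∃ j, 1 ≤ j ∧ j < n ∧ SemiconjBy (blocksProd n p (n / 2)) (p i) (p j) := by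
  obtain ⟨r, rfl | rfl⟩ : ∃ r, i = 2 * r + 1 ∨ i = 2 * r + 2 := ⟨(i - 1) / 2, by omega⟩
  · rcases hin.lt_or_eq with h | h
    · exact .inr ⟨_, by omega, by omega, hp.semiconjBy_blocksProd_odd h⟩
    · refine .inr ⟨1, le_rfl, hn, ?_⟩
      rw [h]
      exact hp.semiconjBy_blocksProd_last_of_odd (r := r - 1) (by omega)
  · obtain h | h | h : 2 * r + 3 < n ∨ n = 2 * r + 3 ∨ n = 2 * r + 2 := by omega
    · exact .inr ⟨_, by omega, by omega, hp.semiconjBy_blocksProd_even h⟩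
    · left
      rw [show 2 * r + 2 = n - 1 by omega]
      exact hp.blocksProd_mul_pred_of_odd h
    · left
      rw [← h]
      exact hp.blocksProd_mul_last_of_even h

lemma staircaseProd_mul {s j : ℕ} (hj : 1 ≤ j) (hjs : j < s) (hsn : s ≤ n) :
    staircaseProd p s * p j = staircaseProd p s := by
  induction s generalizing j with
  | zero => omega
  | succ s ih =>
    rw [staircaseProd_succ, mul_assoc]
    obtain rfl | h : j = 1 ∨ 1 < j := by omega
    · rw [hp.descProd_mul_self le_rfl (by omega) (by omega)]
    · rw [(hp.semiconjBy_descProd le_rfl h (by omega) (by omega)).eq, ← mul_assoc,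
        ih (by omega) (by omega) (by omega)]

lemma prod_wordFull_mul (hn : 2 ≤ n) {i : ℕ} (hi : 1 ≤ i) (hin : i ≤ n) :
    ((wordFull n).map p).prod * p i = ((wordFull n).map p).prod := by
  rw [prod_map_wordFull, mul_assoc]
  rcases hp.blocksProd_mul_eq_or_semiconjBy hn hi hin with h | ⟨j, hj, hjn, h⟩
  · rw [h]
  · rw [h.eq, ← mul_assoc, hp.staircaseProd_mul hj hjn le_rfl]

lemma op : IsZeroHeckeD n fun i => MulOpposite.op (p i) where
  idem i hi hin := by rw [← MulOpposite.op_mul, hp.idem i hi hin]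
  commute i j hi hij hj h := (hp.commute i j hi hij hj h).op
  braid i j hi h := by
    simp only [← MulOpposite.op_mul, ← mul_assoc]
    rw [hp.braid i j hi h]

-- The full word and its reverse have the same product, namely that of their concatenation.
lemma mul_prod_wordFull (hn : 2 ≤ n) {i : ℕ} (hi : 1 ≤ i) (hin : i ≤ n) :
    p i * ((wordFull n).map p).prod = ((wordFull n).map p).prod := by
  set w := (wordFull n).map p
  have mul_rev : ∀ j, 1 ≤ j → j ≤ n → p j * w.reverse.prod = w.reverse.prod := fun j hj hjn => by
    have h := congrArg MulOpposite.unop (hp.op.prod_wordFull_mul hn hj hjn)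
    rw [MulOpposite.unop_mul, MulOpposite.unop_list_prod] at h
    simpa [w, List.map_map, Function.comp_def] using h
  have w_mul_rev : w.prod * w.reverse.prod = w.reverse.prod := by
    refine list_prod_mul_eq_right fun y hy => ?_
    obtain ⟨k, hk, rfl⟩ := List.mem_map.1 hy
    exact mul_rev k (mem_wordFull hk).1 (mem_wordFull hk).2
  have w_mul_rev' : w.prod * w.reverse.prod = w.prod := by
    refine mul_list_prod_eq_left fun y hy => ?_
    obtain ⟨k, hk, rfl⟩ := List.mem_map.1 (List.mem_reverse.1 hy)
    exact hp.prod_wordFull_mul hn (mem_wordFull hk).1 (mem_wordFull hk).2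
  rw [← w_mul_rev', w_mul_rev, mul_rev i hi hin]

end IsZeroHeckeD

/-! ### Root matrices and the torus -/

section RankOne

variable {𝕜 R : Type*} [Field 𝕜] [Ring R] [Algebra 𝕜 R] {N M : R}

lemma commute_one_add_smul (h : Commute N M) (a b : 𝕜) : Commute (1 + a • N) (1 + b • M) :=
  ((Commute.one_left _).add_left ((Commute.one_right _).add_right
    ((h.smul_left a).smul_right b)))

lemma one_add_smul_mul_one_add_smul (h : N * N = 0) (a b : 𝕜) :
    (1 + a • N) * (1 + b • N) = 1 + (a + b) • N := by
  simp only [add_mul, mul_add, one_mul, mul_one, smul_mul_assoc, mul_smul_comm, h, smul_zero]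
  module

lemma one_add_smul_mul_three (hN : N * N = 0) (hNMN : N * M * N = 0) (a b c : 𝕜) :
    (1 + a • N) * (1 + b • M) * (1 + c • N) =
      1 + (a + c) • N + b • M + (a * b) • (N * M) + (b * c) • (M * N) := by
  simp only [add_mul, mul_add, one_mul, mul_one, smul_mul_assoc, mul_smul_comm, hN, hNMN,
    smul_zero, add_zero]
  module

lemma one_add_smul_braid (hN : N * N = 0) (hM : M * M = 0) (hNMN : N * M * N = 0)
    (hMNM : M * N * M = 0) (a b : 𝕜) {c : 𝕜} (hac : a + c ≠ 0) :
    (1 + a • N) * (1 + b • M) * (1 + c • N) =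
      (1 + (b * c / (a + c)) • M) * (1 + (a + c) • N) * (1 + (a * b / (a + c)) • M) := by
  rw [one_add_smul_mul_three hN hNMN, one_add_smul_mul_three hM hMNM]
  match_scalars <;> (field_simp; try ring)

-- In `SL₂`: `[1 a; 0 1] [1 0; b 1] = [1 0; b/s 1] [s 0; 0 s⁻¹] [1 a/s; 0 1]` with `s = 1 + a b`.
lemma one_add_smul_exchange (hN : N * N = 0) (hM : M * M = 0) (hNMN : N * M * N = N)
    (hMNM : M * N * M = M) {a b s : 𝕜} (hs : s = 1 + a * b) (hs0 : s ≠ 0) :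
    (1 + a • N) * (1 + b • M) = (1 + (b / s) • M) *
      ((1 + (s - 1) • (N * M) + (s⁻¹ - 1) • (M * N)) * (1 + (a / s) • N)) := by
  have hMNN : M * N * N = 0 := by rw [mul_assoc, hN, mul_zero]
  have hMMN : M * (M * N) = 0 := by rw [← mul_assoc, hM, zero_mul]
  have hright : (1 + (s - 1) • (N * M) + (s⁻¹ - 1) • (M * N)) * (1 + (a / s) • N) =
      1 + (s - 1) • (N * M) + (s⁻¹ - 1) • (M * N) + a • N := by
    simp only [add_mul, mul_add, one_mul, mul_one, smul_mul_assoc, mul_smul_comm, hNMN, hMNN,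
      smul_zero, add_zero]
    match_scalars <;> (field_simp; try ring)
  rw [hright]
  simp only [add_mul, mul_add, one_mul, mul_one, smul_mul_assoc, mul_smul_comm, hMMN,
    ← mul_assoc M N M, hMNM, smul_zero, add_zero]
  match_scalars <;> field_simp <;> (rw [hs]; ring)

end RankOne

section TwoUnits

variable {ι R : Type*} [Fintype ι] [DecidableEq ι] [CommRing R] {a b a' b' : ι}

lemma single_mul_single_of_eq {c : ι} (h : b = c) (a d : ι) :
    single a b (1 : R) * single c d 1 = single a d 1 := by
  rw [h, single_mul_single_same, one_mul]

lemma single_mul_diagonal (a b : ι) (d : ι → R) :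
    single a b 1 * diagonal d = d b • single a b (1 : R) := by
  ext p q
  by_cases hq : b = q <;> simp [single_apply, hq]

lemma diagonal_mul_single (a b : ι) (d : ι → R) :
    diagonal d * single a b 1 = d a • single a b (1 : R) := by
  ext p q
  by_cases hp : a = p <;> simp [single_apply, hp]

lemma single_sub_single_mul_self (hab : a ≠ b) (hba' : b ≠ a') (hb'a : b' ≠ a) (hb'a' : b' ≠ a') :
    (single a b 1 - single a' b' 1 : Matrix ι ι R) * (single a b 1 - single a' b' 1) = 0 := by
  simp [sub_mul, mul_sub, single_mul_single_of_ne, *, hab.symm]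

lemma single_sub_single_mul_transpose (h : b ≠ b') :
    (single a b 1 - single a' b' 1 : Matrix ι ι R) * (single a b 1 - single a' b' 1)ᵀ =
      single a a 1 + single a' a' 1 := by
  simp [sub_mul, mul_sub, single_mul_single_of_ne, h, h.symm]

lemma single_sub_single_mul_transpose_mul_self (ha : a ≠ a') (hb : b ≠ b') :
    (single a b 1 - single a' b' 1 : Matrix ι ι R) * (single a b 1 - single a' b' 1)ᵀ *
      (single a b 1 - single a' b' 1) = single a b 1 - single a' b' 1 := by
  rw [single_sub_single_mul_transpose hb]
  simp [add_mul, mul_sub, single_mul_single_of_ne, ha, ha.symm]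

end TwoUnits

/-- The nilpotent matrix `N_i` with `x_i(t) = 1 + t N_i`. -/
def rootMat (n i : ℕ) : Matrix (Fin (2 * n)) (Fin (2 * n)) ℝ := xMat n i 1 - 1

lemma xMat_eq_one_add_smul (n i : ℕ) (t : ℝ) : xMat n i t = 1 + t • rootMat n i := by
  ext p q
  simp only [rootMat, xMat, Matrix.add_apply, Matrix.smul_apply, Matrix.sub_apply, Matrix.of_apply,
    Matrix.one_apply, Fin.ext_iff]
  split_ifs <;> simp

lemma rootMat_of_lt {n i : ℕ} (hi : 1 ≤ i) (hin : i < n) :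
    rootMat n i = single ⟨i - 1, by omega⟩ ⟨i, by omega⟩ 1 -
      single ⟨n + i, by omega⟩ ⟨n + i - 1, by omega⟩ 1 := by
  ext p q
  simp only [rootMat, xMat, Matrix.sub_apply, Matrix.of_apply, single_apply, Matrix.one_apply,
    Fin.ext_iff, hin, if_true]
  split_ifs <;> first | omega | simp

lemma rootMat_self {n : ℕ} (hn : 2 ≤ n) :
    rootMat n n = single ⟨n - 2, by omega⟩ ⟨2 * n - 1, by omega⟩ 1 -
      single ⟨n - 1, by omega⟩ ⟨2 * n - 2, by omega⟩ 1 := by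
  ext p q
  simp only [rootMat, xMat, Matrix.sub_apply, Matrix.of_apply, single_apply, Matrix.one_apply,
    Fin.ext_iff, lt_irrefl, if_false]
  split_ifs <;> first | omega | simp

lemma commute_rootMat {n i j : ℕ} (hi : 1 ≤ i) (hij : i < j) (hjn : j ≤ n)
    (h : ¬DynkinDEdge n i j) : Commute (rootMat n i) (rootMat n j) := by
  unfold DynkinDEdge at h
  rw [Commute, SemiconjBy, rootMat_of_lt hi (by omega)]
  rcases hjn.lt_or_eq with hj | rfl
  · rw [rootMat_of_lt (by omega) hj]
    simp (disch := (simp only [ne_eq, Fin.mk.injEq]; omega)) only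
      [mul_sub, sub_mul, single_mul_single_of_ne]
  · rw [rootMat_self (by omega)]
    rcases Nat.lt_or_ge (i + 1) j with hij' | hij'
    · simp (disch := (simp only [ne_eq, Fin.mk.injEq]; omega)) only
        [mul_sub, sub_mul, single_mul_single_of_ne]
    · obtain ⟨m, rfl⟩ : ∃ m, i = m + 1 := ⟨i - 1, by omega⟩
      obtain rfl : j = m + 2 := by omega
      simp (disch := (simp only [ne_eq, Fin.mk.injEq]; omega)) only
        [mul_sub, sub_mul, single_mul_single_of_ne, single_mul_single_of_eq, sub_zero, zero_sub]
      congr 2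
      simp only [Fin.mk.injEq]; omega

lemma rootMat_mul_rootMat_mul_rootMat {n i j : ℕ} (hi : 1 ≤ i) (h : DynkinDEdge n i j) :
    rootMat n i * rootMat n j * rootMat n i = 0 ∧ rootMat n j * rootMat n i * rootMat n j = 0 := by
  rcases h with ⟨rfl, hj⟩ | ⟨rfl, rfl⟩
  · rw [rootMat_of_lt hi (by omega), rootMat_of_lt (by omega) hj]
    constructor <;> simp (disch := (simp only [ne_eq, Fin.mk.injEq]; omega)) only
      [mul_sub, sub_mul, single_mul_single_of_ne, single_mul_single_of_eq, sub_zero, zero_sub,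
        neg_zero, neg_mul]
  · rw [rootMat_of_lt hi (by omega), rootMat_self (by omega)]
    constructor <;> simp (disch := (simp only [ne_eq, Fin.mk.injEq]; omega)) only
      [mul_sub, sub_mul, single_mul_single_of_ne, single_mul_single_of_eq, sub_zero, zero_sub,
        neg_zero, neg_mul]

lemma commute_rootMat_transpose_of_lt {n i j : ℕ} (hi : 1 ≤ i) (hin : i < n) (hj : 1 ≤ j)
    (hjn : j ≤ n) (hij : i ≠ j) : Commute (rootMat n i) (rootMat n j)ᵀ := by
  rw [Commute, SemiconjBy, rootMat_of_lt hi hin]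
  rcases hjn.lt_or_eq with hj' | rfl
  · rw [rootMat_of_lt hj hj']
    simp (disch := (simp only [ne_eq, Fin.mk.injEq]; omega)) only
      [transpose_sub, transpose_single, mul_sub, sub_mul, single_mul_single_of_ne]
  · rw [rootMat_self (by omega)]
    rcases Nat.lt_or_ge (i + 1) j with hij' | hij'
    · simp (disch := (simp only [ne_eq, Fin.mk.injEq]; omega)) only
        [transpose_sub, transpose_single, mul_sub, sub_mul, single_mul_single_of_ne]
    · obtain ⟨m, rfl⟩ : ∃ m, i = m + 1 := ⟨i - 1, by omega⟩
      obtain rfl : j = m + 2 := by omega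
      simp (disch := (simp only [ne_eq, Fin.mk.injEq]; omega)) only
        [transpose_sub, transpose_single, mul_sub, sub_mul, single_mul_single_of_ne,
          single_mul_single_of_eq, sub_zero, zero_sub, neg_neg]
      congr 1
      simp only [Fin.mk.injEq]; omega

lemma commute_rootMat_transpose {n i j : ℕ} (hi : 1 ≤ i) (hin : i ≤ n) (hj : 1 ≤ j) (hjn : j ≤ n)
    (hij : i ≠ j) : Commute (rootMat n i) (rootMat n j)ᵀ := by
  rcases hin.lt_or_eq with h | rfl
  · exact commute_rootMat_transpose_of_lt hi h hj hjn hij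
  · have h := commute_rootMat_transpose_of_lt hj (lt_of_le_of_ne hjn hij.symm) hi le_rfl hij.symm
    simpa [Commute, SemiconjBy] using congrArg transpose h.eq

/-- `rootMat n i` is the difference of the matrix units at `(a, b)` and `(a', b')`, where the
pairs `a`, `b'` and `b`, `a'` are dual, i.e. their members differ by `n`. -/
structure IsRootPosition (n i : ℕ) (a b a' b' : Fin (2 * n)) : Prop where
  nodup : [a, b, a', b'].Nodup
  dual_left : (a : ℕ) + n = b' ∨ (b' : ℕ) + n = a
  dual_right : (b : ℕ) + n = a' ∨ (a' : ℕ) + n = b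
  rootMat_eq : rootMat n i = single a b 1 - single a' b' 1

lemma exists_isRootPosition {n i : ℕ} (hn : 2 ≤ n) (hi : 1 ≤ i) (hin : i ≤ n) :
    ∃ a b a' b', IsRootPosition n i a b a' b' := by
  rcases hin.lt_or_eq with h | rfl
  · refine ⟨_, _, _, _, ?_, ?_, ?_, rootMat_of_lt hi h⟩
    · simp [Fin.ext_iff]; omega
    all_goals simp only []; omega
  · refine ⟨_, _, _, _, ?_, ?_, ?_, rootMat_self hn⟩
    · simp [Fin.ext_iff]; omega
    all_goals simp only []; omega

/-- The diagonal matrices of the maximal torus of `SO(2n)`: the entries at positions differing by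
`n` are inverse to each other. -/
def IsTorusWeight {n : ℕ} (d : Fin (2 * n) → ℝ) : Prop :=
  ∀ k l : Fin (2 * n), (k : ℕ) + n = l → d k * d l = 1

lemma IsTorusWeight.mul {n : ℕ} {d e : Fin (2 * n) → ℝ} (hd : IsTorusWeight d)
    (he : IsTorusWeight e) : IsTorusWeight (d * e) := fun k l h => by
  rw [Pi.mul_apply, Pi.mul_apply, mul_mul_mul_comm, hd k l h, he k l h, one_mul]

lemma IsTorusWeight.mul_eq_one {n : ℕ} {d : Fin (2 * n) → ℝ} (hd : IsTorusWeight d)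
    {k l : Fin (2 * n)} (h : (k : ℕ) + n = l ∨ (l : ℕ) + n = k) : d k * d l = 1 :=
  h.elim (hd k l) fun h => by rw [mul_comm, hd l k h]

section RootMat

variable {n i : ℕ} (hn : 2 ≤ n) (hi : 1 ≤ i) (hin : i ≤ n)
include hn hi hin

lemma rootMat_mul_self : rootMat n i * rootMat n i = 0 := by
  obtain ⟨a, b, a', b', h⟩ := exists_isRootPosition hn hi hin
  have hne := h.nodup
  simp only [List.nodup_cons, List.mem_cons, List.not_mem_nil, or_false, not_or] at hne
  rw [h.rootMat_eq]
  exact single_sub_single_mul_self hne.1.1 hne.2.1.1 (Ne.symm hne.1.2.2) (Ne.symm hne.2.2.1)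

lemma rootMat_mul_transpose_mul_rootMat :
    rootMat n i * (rootMat n i)ᵀ * rootMat n i = rootMat n i := by
  obtain ⟨a, b, a', b', h⟩ := exists_isRootPosition hn hi hin
  have hne := h.nodup
  simp only [List.nodup_cons, List.mem_cons, List.not_mem_nil, or_false, not_or] at hne
  rw [h.rootMat_eq]
  exact single_sub_single_mul_transpose_mul_self hne.1.2.1 hne.2.1.2

lemma exists_rootMat_mul_diagonal {d : Fin (2 * n) → ℝ} (hd : IsTorusWeight d) :
    ∃ k l, rootMat n i * diagonal d = (d k * d l) • (diagonal d * rootMat n i) := by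
  obtain ⟨a, b, a', b', h⟩ := exists_isRootPosition hn hi hin
  refine ⟨b, b', ?_⟩
  have ha : d b * d b' * d a = d b := by
    rw [mul_assoc, mul_comm (d b'), hd.mul_eq_one h.dual_left, mul_one]
  have ha' : d b * d b' * d a' = d b' := by
    rw [mul_right_comm, hd.mul_eq_one h.dual_right, one_mul]
  simp only [h.rootMat_eq, sub_mul, mul_sub, single_mul_diagonal, diagonal_mul_single, smul_sub,
    smul_smul, ha, ha']

lemma exists_coroot_eq_diagonal {s : ℝ} (hs : s ≠ 0) :
    ∃ e : Fin (2 * n) → ℝ, IsTorusWeight e ∧ (∀ k, e k = s ∨ e k = s⁻¹ ∨ e k = 1) ∧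
      1 + (s - 1) • (rootMat n i * (rootMat n i)ᵀ) + (s⁻¹ - 1) • ((rootMat n i)ᵀ * rootMat n i) =
        diagonal e := by
  obtain ⟨a, b, a', b', h⟩ := exists_isRootPosition hn hi hin
  have hne := h.nodup
  simp only [List.nodup_cons, List.mem_cons, List.not_mem_nil, or_false, not_or] at hne
  obtain ⟨⟨hab, haa', hab'⟩, ⟨hba', hbb'⟩, ha'b', -⟩ := hne
  refine ⟨fun p => if p = a ∨ p = a' then s else if p = b ∨ p = b' then s⁻¹ else 1, ?_, ?_, ?_⟩
  · have hl := h.dual_left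
    have hr := h.dual_right
    intro k l hkl
    simp only [Fin.ext_iff] at hab haa' hab' hba' hbb' ha'b' ⊢
    split_ifs <;> first | omega | simp [hs]
  · intro p
    dsimp only
    split_ifs <;> simp
  · have hleft : rootMat n i * (rootMat n i)ᵀ = single a a 1 + single a' a' 1 := by
      rw [h.rootMat_eq, single_sub_single_mul_transpose hbb']
    have hright : (rootMat n i)ᵀ * rootMat n i = single b b 1 + single b' b' 1 := by
      have := single_sub_single_mul_transpose (R := ℝ) (a := b) (b := a) (a' := b') (b' := a') haa'
      simpa [h.rootMat_eq] using this
    rw [hleft, hright]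
    ext p q
    simp only [Matrix.add_apply, Matrix.smul_apply, one_apply, single_apply, diagonal_apply,
      smul_eq_mul]
    grind

end RootMat

/-! ### Exchanging upper and lower triangular factors -/

section Exchange

variable {n i j : ℕ}

lemma xMat_zero (n i : ℕ) : xMat n i 0 = 1 := by
  rw [xMat_eq_one_add_smul, zero_smul, add_zero]

lemma transpose_xMat (n i : ℕ) (t : ℝ) : (xMat n i t)ᵀ = 1 + t • (rootMat n i)ᵀ := by
  rw [xMat_eq_one_add_smul, transpose_add, transpose_one, transpose_smul]

lemma xMat_mul_xMat (hn : 2 ≤ n) (hi : 1 ≤ i) (hin : i ≤ n) (s t : ℝ) :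
    xMat n i s * xMat n i t = xMat n i (s + t) := by
  simp only [xMat_eq_one_add_smul]
  exact one_add_smul_mul_one_add_smul (rootMat_mul_self hn hi hin) s t

lemma isUnit_xMat (hn : 2 ≤ n) (hi : 1 ≤ i) (hin : i ≤ n) (t : ℝ) : IsUnit (xMat n i t) := by
  refine IsUnit.of_mul_eq_one (xMat n i (-t)) ?_
  rw [xMat_mul_xMat hn hi hin, add_neg_cancel, xMat_zero]

lemma exists_xMat_mul_diagonal (hn : 2 ≤ n) (hi : 1 ≤ i) (hin : i ≤ n) {d : Fin (2 * n) → ℝ}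
    (hd : IsTorusWeight d) :
    ∃ k l, ∀ t, xMat n i t * diagonal d = diagonal d * xMat n i (d k * d l * t) := by
  obtain ⟨k, l, h⟩ := exists_rootMat_mul_diagonal hn hi hin hd
  refine ⟨k, l, fun t => ?_⟩
  simp only [xMat_eq_one_add_smul, add_mul, mul_add, one_mul, mul_one, smul_mul_assoc, h,
    mul_smul_comm, smul_smul, mul_comm t]

lemma exists_xMat_mul_transpose_xMat (hn : 2 ≤ n) (hi : 1 ≤ i) (hin : i ≤ n) (hj : 1 ≤ j)
    (hjn : j ≤ n) {a b s : ℝ} (hs : s = if i = j then 1 + a * b else 1) (hs0 : s ≠ 0) :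
    ∃ e : Fin (2 * n) → ℝ, IsTorusWeight e ∧ (∀ k, e k = s ∨ e k = s⁻¹ ∨ e k = 1) ∧
      xMat n i a * (xMat n j b)ᵀ = (xMat n j (b / s))ᵀ * (diagonal e * xMat n i (a / s)) := by
  split_ifs at hs with hij
  · obtain ⟨e, he, hes, hcoroot⟩ := exists_coroot_eq_diagonal hn hi hin hs0
    subst hij
    have hN := rootMat_mul_self hn hi hin
    have hNMN := rootMat_mul_transpose_mul_rootMat hn hi hin
    refine ⟨e, he, hes, ?_⟩
    simp only [transpose_xMat]
    simp only [xMat_eq_one_add_smul, ← hcoroot]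
    refine one_add_smul_exchange hN ?_ hNMN ?_ hs hs0
    · rw [← transpose_mul, hN, transpose_zero]
    · simpa [mul_assoc] using congrArg transpose hNMN
  · refine ⟨1, fun _ _ _ => one_mul 1, fun _ => .inr (.inr rfl), ?_⟩
    rw [hs, div_one, div_one, diagonal_one', one_mul, transpose_xMat, xMat_eq_one_add_smul]
    exact commute_one_add_smul (commute_rootMat_transpose hi hin hj hjn hij) a b

lemma exists_xMat_mul_lower (hn : 2 ≤ n) (hi : 1 ≤ i) (hin : i ≤ n) (hj : 1 ≤ j)
    (hjn : j ≤ n) {a b s : ℝ} (hs : s = if i = j then 1 + a * b else 1) (hs0 : s ≠ 0)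
    {d : Fin (2 * n) → ℝ} (hd : IsTorusWeight d) :
    ∃ e : Fin (2 * n) → ℝ, IsTorusWeight e ∧ (∀ k, e k = s ∨ e k = s⁻¹ ∨ e k = 1) ∧ ∃ k l,
      xMat n i a * ((xMat n j b)ᵀ * diagonal d) =
        (xMat n j (b / s))ᵀ * diagonal (e * d) * xMat n i (d k * d l * (a / s)) := by
  obtain ⟨e, he, hes, hexch⟩ := exists_xMat_mul_transpose_xMat hn hi hin hj hjn hs hs0
  obtain ⟨k, l, hkl⟩ := exists_xMat_mul_diagonal hn hi hin hd
  refine ⟨e, he, hes, k, l, ?_⟩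
  rw [← mul_assoc, hexch, mul_assoc, mul_assoc, hkl, ← mul_assoc (diagonal e),
    diagonal_mul_diagonal, ← mul_assoc]
  rfl

end Exchange

section Letters

open scoped Pointwise

/-- The matrices `x_i(t)` with `t ∈ S`. -/
def upperLetters (n : ℕ) (S : Set ℝ) (i : ℕ) : Set (Matrix (Fin (2 * n)) (Fin (2 * n)) ℝ) :=
  xMat n i '' S

/-- The matrices `x_i(t)ᵀ h` with `t ∈ S` and `h` in the torus, with all entries of `h` in `S`. -/
def lowerLetters (n : ℕ) (S : Set ℝ) (i : ℕ) : Set (Matrix (Fin (2 * n)) (Fin (2 * n)) ℝ) :=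
  {g | ∃ t ∈ S, ∃ d, IsTorusWeight d ∧ (∀ k, d k ∈ S) ∧ g = (xMat n i t)ᵀ * diagonal d}

/-- The products of upper triangular letters along a word. -/
def upperProd (n : ℕ) (S : Set ℝ) (w : List ℕ) : Set (Matrix (Fin (2 * n)) (Fin (2 * n)) ℝ) :=
  (w.map (upperLetters n S)).prod

/-- The products of lower triangular letters along a word. -/
def lowerProd (n : ℕ) (S : Set ℝ) (w : List ℕ) : Set (Matrix (Fin (2 * n)) (Fin (2 * n)) ℝ) :=
  (w.map (lowerLetters n S)).prod

lemma upperProd_append (n : ℕ) (S : Set ℝ) (v w : List ℕ) :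
    upperProd n S (v ++ w) = upperProd n S v * upperProd n S w := by
  rw [upperProd, List.map_append, List.prod_append, upperProd, upperProd]

lemma upperProd_singleton (n : ℕ) (S : Set ℝ) (i : ℕ) :
    upperProd n S [i] = upperLetters n S i := by
  simp [upperProd]

lemma lowerProd_cons (n : ℕ) (S : Set ℝ) (i : ℕ) (w : List ℕ) :
    lowerProd n S (i :: w) = lowerLetters n S i * lowerProd n S w := by
  simp [lowerProd]

lemma upperLetters_mono {n : ℕ} {S T : Set ℝ} (h : S ⊆ T) (i : ℕ) :
    upperLetters n S i ⊆ upperLetters n T i :=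
  Set.image_mono h

lemma lowerLetters_mono {n : ℕ} {S T : Set ℝ} (h : S ⊆ T) (i : ℕ) :
    lowerLetters n S i ⊆ lowerLetters n T i := by
  rintro _ ⟨t, ht, d, hd, hdS, rfl⟩
  exact ⟨t, h ht, d, hd, fun k => h (hdS k), rfl⟩

lemma list_prod_map_subset {ι M : Type*} [Monoid M] {f g : ι → Set M} {w : List ι}
    (h : ∀ i, f i ⊆ g i) : (w.map f).prod ⊆ (w.map g).prod := by
  induction w with
  | nil => simp
  | cons i w ih =>
    simp only [List.map_cons, List.prod_cons]
    exact Set.mul_subset_mul (h i) ih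

lemma upperProd_mono {n : ℕ} {S T : Set ℝ} (h : S ⊆ T) (w : List ℕ) :
    upperProd n S w ⊆ upperProd n T w :=
  list_prod_map_subset (upperLetters_mono h)

lemma lowerProd_mono {n : ℕ} {S T : Set ℝ} (h : S ⊆ T) (w : List ℕ) :
    lowerProd n S w ⊆ lowerProd n T w :=
  list_prod_map_subset (lowerLetters_mono h)

lemma list_prod_map_mem {ι M : Type*} [Monoid M] {f : ι → M} {g : ι → Set M} {w : List ι}
    (h : ∀ i, f i ∈ g i) : (w.map f).prod ∈ (w.map g).prod := by
  induction w with
  | nil => simp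
  | cons i w ih =>
    simp only [List.map_cons, List.prod_cons]
    exact Set.mul_mem_mul (h i) ih

lemma list_prod_map_subset_submonoid {ι M : Type*} [Monoid M] {f : ι → Set M} {w : List ι}
    {P : Submonoid M} (h : ∀ i ∈ w, f i ⊆ P) : (w.map f).prod ⊆ P := by
  induction w with
  | nil => simp
  | cons i w ih =>
    simp only [List.map_cons, List.prod_cons]
    exact (Set.mul_subset_mul (h i (by simp)) (ih fun j hj => h j (by simp [hj]))).trans
      (Submonoid.coe_mul_self_eq P).le

lemma list_prod_map_mul_subset {ι M : Type*} [Monoid M] {f : ι → Set M} {s : Set M}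
    {w : List ι}
    (h : ∀ i ∈ w, f i * s ⊆ s * f i) : (w.map f).prod * s ⊆ s * (w.map f).prod := by
  induction w with
  | nil => simp
  | cons i w ih =>
    simp only [List.map_cons, List.prod_cons]
    calc f i * (w.map f).prod * s ⊆ f i * (s * (w.map f).prod) := by
          rw [mul_assoc]; exact Set.mul_subset_mul_left (ih fun j hj => h j (by simp [hj]))
      _ ⊆ s * f i * (w.map f).prod := by
          rw [← mul_assoc]; exact Set.mul_subset_mul_right (h i (by simp))
      _ = s * (f i * (w.map f).prod) := mul_assoc _ _ _

lemma xMat_braid {n i j : ℕ} (hn : 2 ≤ n) (hi : 1 ≤ i) (hj : 1 ≤ j)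
    (h : DynkinDEdge n i j ∨ DynkinDEdge n j i) (a b : ℝ) {c : ℝ} (hac : a + c ≠ 0) :
    xMat n i a * xMat n j b * xMat n i c =
      xMat n j (b * c / (a + c)) * xMat n i (a + c) * xMat n j (a * b / (a + c)) := by
  have hin : i ≤ n := by unfold DynkinDEdge at h; omega
  have hjn : j ≤ n := by unfold DynkinDEdge at h; omega
  have hcube : rootMat n i * rootMat n j * rootMat n i = 0 ∧
      rootMat n j * rootMat n i * rootMat n j = 0 :=
    h.elim (rootMat_mul_rootMat_mul_rootMat hi) fun h => (rootMat_mul_rootMat_mul_rootMat hj h).symm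
  simp only [xMat_eq_one_add_smul]
  exact one_add_smul_braid (rootMat_mul_self hn hi hin) (rootMat_mul_self hn hj hjn) hcube.1
    hcube.2 a b hac

lemma upperLetters_braid_subset {n i j : ℕ} (hn : 2 ≤ n) (hi : 1 ≤ i) (hj : 1 ≤ j)
    (h : DynkinDEdge n i j ∨ DynkinDEdge n j i) :
    upperLetters n (Set.Ioi 0) i * upperLetters n (Set.Ioi 0) j * upperLetters n (Set.Ioi 0) i ⊆
      upperLetters n (Set.Ioi 0) j * upperLetters n (Set.Ioi 0) i *
        upperLetters n (Set.Ioi 0) j := by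
  rintro _ ⟨_, ⟨_, ⟨a, ha, rfl⟩, _, ⟨b, hb, rfl⟩, rfl⟩, _, ⟨c, hc, rfl⟩, rfl⟩
  rw [Set.mem_Ioi] at ha hb hc
  simp only [xMat_braid hn hi hj h a b (add_pos ha hc).ne']
  refine Set.mul_mem_mul (Set.mul_mem_mul ⟨_, ?_, rfl⟩ ⟨_, ?_, rfl⟩) ⟨_, ?_, rfl⟩ <;>
    (rw [Set.mem_Ioi]; positivity)

lemma isZeroHeckeD_upperLetters {n : ℕ} (hn : 2 ≤ n) :
    IsZeroHeckeD n (upperLetters n (Set.Ioi 0)) where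
  idem i hi hin := by
    refine subset_antisymm ?_ ?_
    · rintro _ ⟨_, ⟨a, ha, rfl⟩, _, ⟨b, hb, rfl⟩, rfl⟩
      exact ⟨a + b, Set.mem_Ioi.2 (add_pos ha hb), (xMat_mul_xMat hn hi hin a b).symm⟩
    · rintro _ ⟨a, ha, rfl⟩
      rw [← add_halves a, ← xMat_mul_xMat hn hi hin]
      exact Set.mul_mem_mul ⟨_, Set.mem_Ioi.2 (half_pos ha), rfl⟩
        ⟨_, Set.mem_Ioi.2 (half_pos ha), rfl⟩
  commute i j hi hij hjn h := by
    have hcomm (a b : ℝ) : xMat n i a * xMat n j b = xMat n j b * xMat n i a := by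
      simp only [xMat_eq_one_add_smul]
      exact commute_one_add_smul (commute_rootMat hi hij hjn h) a b
    refine subset_antisymm ?_ ?_
    · rintro _ ⟨_, ⟨a, ha, rfl⟩, _, ⟨b, hb, rfl⟩, rfl⟩
      exact ⟨_, ⟨b, hb, rfl⟩, _, ⟨a, ha, rfl⟩, (hcomm a b).symm⟩
    · rintro _ ⟨_, ⟨b, hb, rfl⟩, _, ⟨a, ha, rfl⟩, rfl⟩
      exact ⟨_, ⟨a, ha, rfl⟩, _, ⟨b, hb, rfl⟩, hcomm a b⟩
  braid i j hi h := by
    have hj : 1 ≤ j := by unfold DynkinDEdge at h; omega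
    exact (upperLetters_braid_subset hn hi hj (.inl h)).antisymm
      (upperLetters_braid_subset hn hj hi (.inr h))

lemma mul_mem_Icc_inv {K L x y : ℝ} (hK : 0 < K) (hL : 0 < L) (hx : x ∈ Set.Icc K⁻¹ K)
    (hy : y ∈ Set.Icc L⁻¹ L) : x * y ∈ Set.Icc (K * L)⁻¹ (K * L) := by
  have hx0 : 0 ≤ x := (inv_pos.2 hK).le.trans hx.1
  exact ⟨by rw [mul_inv]; exact mul_le_mul hx.1 hy.1 (inv_pos.2 hL).le hx0,
    mul_le_mul hx.2 hy.2 ((inv_pos.2 hL).le.trans hy.1) hK.le⟩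

lemma inv_mem_Icc_inv {K x : ℝ} (hK : 0 < K) (hx : x ∈ Set.Icc K⁻¹ K) :
    x⁻¹ ∈ Set.Icc K⁻¹ K := by
  have hx0 : 0 < x := (inv_pos.2 hK).trans_le hx.1
  exact ⟨inv_anti₀ hx0 hx.2, inv_le_of_inv_le₀ hK hx.1⟩

lemma Icc_inv_subset {K L : ℝ} (hK : 0 < K) (h : K ≤ L) : Set.Icc K⁻¹ K ⊆ Set.Icc L⁻¹ L :=
  Set.Icc_subset_Icc (inv_anti₀ hK h) h

lemma Icc_inv_subset_Ioi {K : ℝ} (hK : 0 < K) : Set.Icc K⁻¹ K ⊆ Set.Ioi 0 :=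
  fun _ hx => (inv_pos.2 hK).trans_le hx.1

lemma mem_Icc_inv_of_eq {M s e : ℝ} (hM : 1 ≤ M) (hs : s ∈ Set.Icc M⁻¹ M)
    (he : e = s ∨ e = s⁻¹ ∨ e = 1) : e ∈ Set.Icc M⁻¹ M := by
  rcases he with rfl | rfl | rfl
  exacts [hs, inv_mem_Icc_inv (one_pos.trans_le hM) hs, ⟨inv_le_one_of_one_le₀ hM, hM⟩]

lemma mul_mul_mem_Icc_zero {K x y r : ℝ} (hK : 0 < K) (hx : x ∈ Set.Icc K⁻¹ K)
    (hy : y ∈ Set.Icc K⁻¹ K) (hr : r ∈ Set.Icc 0 K) : x * y * r ∈ Set.Icc 0 (K * K * K) := by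
  obtain ⟨hxy, hxyK⟩ := mul_mem_Icc_inv hK hK hx hy
  have hxy0 : 0 ≤ x * y := le_trans (by positivity) hxy
  exact ⟨mul_nonneg hxy0 hr.1, mul_le_mul hxyK hr.2 hr.1 (by positivity)⟩

section Pair

variable {n i j : ℕ} (hn : 2 ≤ n) (hi : 1 ≤ i) (hin : i ≤ n)
include hn hi hin

lemma upperLetters_mul_lowerLetters_subset (hj : 1 ≤ j) (hjn : j ≤ n) :
    upperLetters n (Set.Ioi 0) i * lowerLetters n (Set.Ioi 0) j ⊆
      lowerLetters n (Set.Ioi 0) j * upperLetters n (Set.Ioi 0) i := by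
  rintro _ ⟨_, ⟨a, ha, rfl⟩, _, ⟨b, hb, d, hd, hd0, rfl⟩, rfl⟩
  rw [Set.mem_Ioi] at ha hb
  have hs0 : 0 < if i = j then 1 + a * b else 1 := by split_ifs <;> positivity
  obtain ⟨e, he, hes, k, l, heq⟩ := exists_xMat_mul_lower hn hi hin hj hjn rfl hs0.ne' hd
  have he0 (k) : 0 < e k := by rcases hes k with h | h | h <;> rw [h] <;> positivity
  exact ⟨_, ⟨_, div_pos hb hs0, _, he.mul hd, fun k => mul_pos (he0 k) (hd0 k), rfl⟩, _,
    ⟨_, mul_pos (mul_pos (hd0 k) (hd0 l)) (div_pos ha hs0), rfl⟩, heq.symm⟩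

-- The bound on the upper factor does not depend on `a`, since `a / (1 + a b) ≤ b⁻¹`.
lemma upperLetters_mul_lowerLetters_self_subset {K : ℝ} (hK : 0 < K) :
    upperLetters n (Set.Ioi 0) i * lowerLetters n (Set.Icc K⁻¹ K) i ⊆
      lowerLetters n (Set.Ioi 0) i * upperLetters n (Set.Icc 0 (K * K * K)) i := by
  rintro _ ⟨_, ⟨a, ha, rfl⟩, _, ⟨b, hb, d, hd, hdK, rfl⟩, rfl⟩
  rw [Set.mem_Ioi] at ha
  have hb0 : 0 < b := Icc_inv_subset_Ioi hK hb
  have hs0 : 0 < 1 + a * b := by positivity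
  obtain ⟨e, he, hes, k, l, heq⟩ :=
    exists_xMat_mul_lower hn hi hin hi hin (if_pos rfl).symm hs0.ne' hd
  have he0 (k) : 0 < e k := by rcases hes k with h | h | h <;> rw [h] <;> positivity
  have hbound : a / (1 + a * b) ≤ K := calc
    a / (1 + a * b) ≤ b⁻¹ := by
      rw [div_le_iff₀ hs0, inv_mul_eq_div, le_div_iff₀ hb0]; linarith
    _ ≤ K := (inv_mem_Icc_inv hK hb).2
  exact ⟨_, ⟨_, div_pos hb0 hs0, _, he.mul hd,
      fun k => mul_pos (he0 k) (Icc_inv_subset_Ioi hK (hdK k)), rfl⟩, _,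
    ⟨_, mul_mul_mem_Icc_zero hK (hdK k) (hdK l) ⟨(div_pos ha hs0).le, hbound⟩, rfl⟩, heq.symm⟩

lemma exists_upperLetters_mul_lowerLetters_subset (hj : 1 ≤ j) (hjn : j ≤ n) {K : ℝ}
    (hK : 1 ≤ K) :
    ∃ L, K ≤ L ∧ upperLetters n (Set.Icc 0 K) i * lowerLetters n (Set.Icc K⁻¹ K) j ⊆
      lowerLetters n (Set.Icc L⁻¹ L) j * upperLetters n (Set.Icc 0 L) i := by
  have hK0 : 0 < K := one_pos.trans_le hK
  set M := 1 + K * K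
  have hM1 : 1 ≤ M := le_add_of_nonneg_right (by positivity)
  have hM0 : 0 < M := one_pos.trans_le hM1
  have hKKK : K ≤ K * K * K := le_mul_of_one_le_left hK0.le (one_le_mul_of_one_le_of_one_le hK hK)
  have hL : K * K * K ≤ M * (K * K * K) := le_mul_of_one_le_left (by positivity) hM1
  refine ⟨M * (K * K * K), hKKK.trans hL, ?_⟩
  have hsub : Set.Icc (M * K)⁻¹ (M * K) ⊆ Set.Icc (M * (K * K * K))⁻¹ (M * (K * K * K)) :=
    Icc_inv_subset (by positivity) (mul_le_mul_of_nonneg_left hKKK hM0.le)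
  rintro _ ⟨_, ⟨a, ha, rfl⟩, _, ⟨b, hb, d, hd, hdK, rfl⟩, rfl⟩
  have hb0 : 0 ≤ b := (Icc_inv_subset_Ioi hK0 hb).le
  have hab : a * b ∈ Set.Icc 0 (K * K) := ⟨mul_nonneg ha.1 hb0, mul_le_mul ha.2 hb.2 hb0 hK0.le⟩
  obtain ⟨s, hs⟩ : ∃ s, s = if i = j then 1 + a * b else 1 := ⟨_, rfl⟩
  have hs1 : 1 ≤ s := by rw [hs]; split_ifs <;> linarith [hab.1]
  have hsM : s ≤ M := by rw [hs]; split_ifs <;> linarith [hab.2]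
  have hsM' : s ∈ Set.Icc M⁻¹ M := ⟨(inv_le_one_of_one_le₀ hM1).trans hs1, hsM⟩
  obtain ⟨e, he, hes, k, l, heq⟩ :=
    exists_xMat_mul_lower hn hi hin hj hjn hs (one_pos.trans_le hs1).ne' hd
  have hb' : b / s ∈ Set.Icc (M * K)⁻¹ (M * K) := by
    rw [div_eq_inv_mul]
    exact mul_mem_Icc_inv hM0 hK0 (inv_mem_Icc_inv hM0 hsM') hb
  have hed (k) : e k * d k ∈ Set.Icc (M * K)⁻¹ (M * K) :=
    mul_mem_Icc_inv hM0 hK0 (mem_Icc_inv_of_eq hM1 hsM' (hes k)) (hdK k)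
  have ha' : a / s ∈ Set.Icc 0 K :=
    ⟨div_nonneg ha.1 (zero_le_one.trans hs1), (div_le_self ha.1 hs1).trans ha.2⟩
  exact ⟨_, ⟨_, hsub hb', _, he.mul hd, fun k => hsub (hed k), rfl⟩, _,
    ⟨_, Set.Icc_subset_Icc_right hL (mul_mul_mem_Icc_zero hK0 (hdK k) (hdK l) ha'), rfl⟩, heq.symm⟩

lemma exists_upperLetters_mul_lowerProd_subset {w : List ℕ} (hw : ∀ j ∈ w, 1 ≤ j ∧ j ≤ n) {K : ℝ}
    (hK : 1 ≤ K) :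
    ∃ L, K ≤ L ∧ upperLetters n (Set.Icc 0 K) i * lowerProd n (Set.Icc K⁻¹ K) w ⊆
      lowerProd n (Set.Icc L⁻¹ L) w * upperLetters n (Set.Icc 0 L) i := by
  induction w generalizing K with
  | nil => exact ⟨K, le_rfl, by simp [lowerProd]⟩
  | cons j w ih =>
    obtain ⟨⟨hj, hjn⟩, hw⟩ := List.forall_mem_cons.1 hw
    have hK0 : 0 < K := one_pos.trans_le hK
    obtain ⟨L, hKL, hletter⟩ :=
      exists_upperLetters_mul_lowerLetters_subset hn hi hin hj hjn hK
    have hL0 : 0 < L := hK0.trans_le hKL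
    obtain ⟨L', hLL', hword⟩ := ih hw (hK.trans hKL)
    refine ⟨L', hKL.trans hLL', ?_⟩
    rw [lowerProd_cons, lowerProd_cons, ← mul_assoc]
    calc _ ⊆ lowerLetters n (Set.Icc L⁻¹ L) j *
          (upperLetters n (Set.Icc 0 L) i * lowerProd n (Set.Icc L⁻¹ L) w) := by
          rw [← mul_assoc]
          exact Set.mul_subset_mul hletter (lowerProd_mono (Icc_inv_subset hK0 hKL) w)
      _ ⊆ lowerLetters n (Set.Icc L'⁻¹ L') j *
          (lowerProd n (Set.Icc L'⁻¹ L') w * upperLetters n (Set.Icc 0 L') i) :=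
          Set.mul_subset_mul (lowerLetters_mono (Icc_inv_subset hL0 hLL') j) hword
      _ = _ := (mul_assoc _ _ _).symm

end Pair

lemma mul_mul_subset_of_exchange {M : Type*} [Monoid M]
    {U U' x x' x'' y y' W W' W'' : Set M} (hxy : x * y ⊆ y' * x') (hUy : U * y' ⊆ y' * U)
    (hxW : x' * W ⊆ W' * x'') (hUW : U * W' ⊆ W'' * U') :
    U * x * (y * W) ⊆ y' * W'' * (U' * x'') := by
  calc U * x * (y * W) = U * (x * y) * W := by simp only [mul_assoc]
    _ ⊆ U * (y' * x') * W := Set.mul_subset_mul_right (Set.mul_subset_mul_left hxy)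
    _ = U * y' * (x' * W) := by simp only [mul_assoc]
    _ ⊆ y' * U * (W' * x'') := Set.mul_subset_mul hUy hxW
    _ = y' * (U * W') * x'' := by simp only [mul_assoc]
    _ ⊆ y' * (W'' * U') * x'' := Set.mul_subset_mul_right (Set.mul_subset_mul_left hUW)
    _ = y' * W'' * (U' * x'') := by simp only [mul_assoc]

-- The last letter of `v` first meets its own transpose, which bounds its parameter; from then on
-- its parameter stays bounded, and the other letters of `v` see a bounded word again.
lemma exists_upperProd_mul_lowerProd_reverse_subset {n : ℕ} (hn : 2 ≤ n) {v : List ℕ}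
    (hv : ∀ i ∈ v, 1 ≤ i ∧ i ≤ n) {K : ℝ} (hK : 1 ≤ K) :
    ∃ L, upperProd n (Set.Ioi 0) v * lowerProd n (Set.Icc K⁻¹ K) v.reverse ⊆
      lowerProd n (Set.Ioi 0) v.reverse * upperProd n (Set.Icc 0 L) v := by
  induction v using List.reverseRecOn generalizing K with
  | nil => exact ⟨K, by simp [lowerProd, upperProd]⟩
  | append_singleton v i ih =>
    obtain ⟨hi, hin⟩ := hv i (by simp)
    replace hv : ∀ j ∈ v, 1 ≤ j ∧ j ≤ n := fun j hj => hv j (by simp [hj])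
    have hK0 : 0 < K := one_pos.trans_le hK
    have hKKK : K ≤ K * K * K := le_mul_of_one_le_left hK0.le (one_le_mul_of_one_le_of_one_le hK hK)
    have hself := upperLetters_mul_lowerLetters_self_subset hn hi hin hK0
    have hpass : upperProd n (Set.Ioi 0) v * lowerLetters n (Set.Ioi 0) i ⊆
        lowerLetters n (Set.Ioi 0) i * upperProd n (Set.Ioi 0) v :=
      list_prod_map_mul_subset fun j hj =>
        upperLetters_mul_lowerLetters_subset hn (hv j hj).1 (hv j hj).2 hi hin
    obtain ⟨L, hL, hpush⟩ := exists_upperLetters_mul_lowerProd_subset hn hi hin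
      (w := v.reverse) (by simpa using hv) (hK.trans hKKK)
    have hpush' := (Set.mul_subset_mul_left
      (lowerProd_mono (Icc_inv_subset hK0 hKKK) v.reverse)).trans hpush
    obtain ⟨L', hrec⟩ := ih hv (hK.trans (hKKK.trans hL))
    refine ⟨max L L', ?_⟩
    rw [List.reverse_append, List.reverse_singleton, List.singleton_append, upperProd_append,
      upperProd_append, upperProd_singleton, upperProd_singleton, lowerProd_cons, lowerProd_cons]
    exact (mul_mul_subset_of_exchange hself hpass hpush' hrec).trans <|
      Set.mul_subset_mul_left <| Set.mul_subset_mul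
        (upperProd_mono (Set.Icc_subset_Icc_right (le_max_right L L')) v)
        (upperLetters_mono (Set.Icc_subset_Icc_right (le_max_left L L')) i)

lemma transpose_zeps_mem_lowerProd (n : ℕ) {S : Set ℝ} {ε : ℝ} (hε : ε ∈ S) (h1 : 1 ∈ S) :
    (zeps n ε)ᵀ ∈ lowerProd n S (wordFull n).reverse := by
  rw [zeps, transpose_list_prod, List.map_map, ← List.map_reverse]
  refine list_prod_map_mem fun i => ⟨ε, hε, 1, fun _ _ _ => one_mul 1, fun _ => h1, ?_⟩
  rw [diagonal_one', mul_one]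
  rfl

lemma zeps_mem_upperProd (n : ℕ) {S : Set ℝ} {ε : ℝ} (hε : ε ∈ S) :
    zeps n ε ∈ upperProd n S (wordFull n) :=
  list_prod_map_mem fun _ => ⟨ε, hε, rfl⟩

lemma upperProd_mul_upperProd_wordFull_subset {n : ℕ} (hn : 2 ≤ n) {w : List ℕ}
    (hw : ∀ i ∈ w, 1 ≤ i ∧ i ≤ n) :
    upperProd n (Set.Ici 0) w * upperProd n (Set.Ioi 0) (wordFull n) ⊆
      upperProd n (Set.Ioi 0) (wordFull n) := by
  induction w with
  | nil => simp [upperProd]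
  | cons i w ih =>
    obtain ⟨⟨hi, hin⟩, hw⟩ := List.forall_mem_cons.1 hw
    have habsorb : upperLetters n (Set.Ioi 0) i * upperProd n (Set.Ioi 0) (wordFull n) =
        upperProd n (Set.Ioi 0) (wordFull n) :=
      (isZeroHeckeD_upperLetters hn).mul_prod_wordFull hn hi hin
    rw [← List.singleton_append, upperProd_append, upperProd_singleton, mul_assoc]
    refine (Set.mul_subset_mul_left (ih hw)).trans ?_
    rintro _ ⟨_, ⟨t, ht, rfl⟩, g, hg, rfl⟩
    rcases (Set.mem_Ici.1 ht).eq_or_lt with rfl | ht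
    · simpa only [xMat_zero, one_mul] using hg
    · exact habsorb ▸ Set.mul_mem_mul ⟨t, ht, rfl⟩ hg

lemma mem_upperProd_iff {n : ℕ} {S : Set ℝ} {w : List ℕ}
    {g : Matrix (Fin (2 * n)) (Fin (2 * n)) ℝ} :
    g ∈ upperProd n S w ↔ ∃ t : ℕ → ℝ, (∀ k < w.length, t k ∈ S) ∧
      g = ((List.range w.length).map fun k => xMat n (w.getD k 0) (t k)).prod := by
  induction w generalizing g with
  | nil => simp [upperProd]
  | cons i w ih =>
    rw [← List.singleton_append, upperProd_append, upperProd_singleton, Set.mem_mul]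
    simp only [List.singleton_append, List.length_cons, List.range_succ_eq_map, List.map_cons,
      List.prod_cons, List.map_map, Function.comp_def, List.getD_cons_zero, List.getD_cons_succ]
    constructor
    · rintro ⟨_, ⟨a, ha, rfl⟩, h, hh, rfl⟩
      obtain ⟨t, ht, rfl⟩ := ih.1 hh
      refine ⟨fun k => Nat.casesOn k a t, ?_, by simp⟩
      rintro (_ | k) hk
      exacts [ha, ht k (Nat.lt_of_succ_lt_succ hk)]
    · rintro ⟨t, ht, rfl⟩
      exact ⟨_, ⟨t 0, ht 0 (Nat.succ_pos _), rfl⟩, _,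
        ih.2 ⟨fun k => t (k + 1), fun k hk => ht (k + 1) (Nat.succ_lt_succ hk), rfl⟩, rfl⟩

end Letters

/-! ### Row spaces and the parabolic submonoid -/

section RowEquiv

variable {m l k : Type*} [Fintype m] [DecidableEq m]

/-- `M` is obtained from `M'` by an invertible row operation; equivalently, the two matrices
have the same row space. -/
def RowEquiv (M M' : Matrix m k ℝ) : Prop := ∃ C : (Matrix m m ℝ)ˣ, M = (C : Matrix m m ℝ) * M'

lemma RowEquiv.refl (M : Matrix m k ℝ) : RowEquiv M M := ⟨1, by simp⟩

lemma RowEquiv.symm {M M' : Matrix m k ℝ} : RowEquiv M M' → RowEquiv M' M := by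
  rintro ⟨C, rfl⟩
  exact ⟨C⁻¹, by rw [← Matrix.mul_assoc, Units.inv_mul, Matrix.one_mul]⟩

lemma RowEquiv.trans {M M' M'' : Matrix m k ℝ} :
    RowEquiv M M' → RowEquiv M' M'' → RowEquiv M M'' := by
  rintro ⟨C, rfl⟩ ⟨D, rfl⟩
  exact ⟨C * D, by rw [Units.val_mul, Matrix.mul_assoc]⟩

lemma RowEquiv.mul_right [Fintype l] {M M' : Matrix m l ℝ} (h : RowEquiv M M')
    (g : Matrix l k ℝ) : RowEquiv (M * g) (M' * g) := by
  obtain ⟨C, rfl⟩ := h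
  exact ⟨C, Matrix.mul_assoc _ _ _⟩

end RowEquiv

section Blocks

variable {n : ℕ}

/-- The index of the `p`-th column of the first block of an `n × 2n` matrix. -/
def leftIdx (p : Fin n) : Fin (2 * n) := ⟨p, by omega⟩

/-- The index of the `p`-th column of the second block of an `n × 2n` matrix. -/
def rightIdx (p : Fin n) : Fin (2 * n) := ⟨n + p, by omega⟩

/-- The first block of an `n × 2n` matrix. -/
def leftBlock (M : Matrix (Fin n) (Fin (2 * n)) ℝ) : Matrix (Fin n) (Fin n) ℝ :=
  M.submatrix id leftIdx

/-- The second block of an `n × 2n` matrix. -/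
def rightBlock (M : Matrix (Fin n) (Fin (2 * n)) ℝ) : Matrix (Fin n) (Fin n) ℝ :=
  M.submatrix id rightIdx

/-- The matrix `[Id | 0]`; multiplication by it on the left selects the first `n` rows. -/
abbrev firstRows (n : ℕ) : Matrix (Fin n) (Fin (2 * n)) ℝ := IdA 0

lemma ext_blocks {M M' : Matrix (Fin n) (Fin (2 * n)) ℝ} (hl : leftBlock M = leftBlock M')
    (hr : rightBlock M = rightBlock M') : M = M' := by
  ext p q
  rcases Nat.lt_or_ge q n with h | h
  · exact congrFun₂ hl p ⟨q, h⟩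
  · have hq : q = rightIdx ⟨q - n, by omega⟩ := by simp only [rightIdx, Fin.ext_iff]; omega
    rw [hq]
    exact congrFun₂ hr p _

lemma leftBlock_mul (C : Matrix (Fin n) (Fin n) ℝ) (M : Matrix (Fin n) (Fin (2 * n)) ℝ) :
    leftBlock (C * M) = C * leftBlock M := rfl

lemma rightBlock_mul (C : Matrix (Fin n) (Fin n) ℝ) (M : Matrix (Fin n) (Fin (2 * n)) ℝ) :
    rightBlock (C * M) = C * rightBlock M := rfl

lemma leftBlock_IdA (A : Matrix (Fin n) (Fin n) ℝ) : leftBlock (IdA A) = 1 := by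
  ext p q
  simp [leftBlock, leftIdx, IdA, Matrix.one_apply, Fin.ext_iff]

lemma rightBlock_IdA (A : Matrix (Fin n) (Fin n) ℝ) : rightBlock (IdA A) = A := by
  ext p q
  simp [rightBlock, rightIdx, IdA]

lemma firstRows_apply (p : Fin n) (q : Fin (2 * n)) :
    firstRows n p q = if leftIdx p = q then 1 else 0 := by
  simp only [IdA, of_apply, leftIdx, Fin.ext_iff, Matrix.zero_apply]
  split_ifs <;> first | omega | rfl

lemma firstRows_mul (g : Matrix (Fin (2 * n)) (Fin (2 * n)) ℝ) :
    firstRows n * g = g.submatrix leftIdx id := by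
  ext p q
  simp [Matrix.mul_apply, firstRows_apply]

lemma mul_transpose_firstRows (M : Matrix (Fin n) (Fin (2 * n)) ℝ) :
    M * (firstRows n)ᵀ = leftBlock M := by
  ext p q
  simp [Matrix.mul_apply, firstRows_apply, leftBlock]

lemma rowEquiv_IdA_iff {M : Matrix (Fin n) (Fin (2 * n)) ℝ} {A : Matrix (Fin n) (Fin n) ℝ} :
    RowEquiv M (IdA A) ↔ IsUnit (leftBlock M) ∧ (leftBlock M)⁻¹ * rightBlock M = A := by
  constructor
  · rintro ⟨C, rfl⟩
    rw [leftBlock_mul, rightBlock_mul, leftBlock_IdA, rightBlock_IdA, Matrix.mul_one]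
    exact ⟨C.isUnit, nonsing_inv_mul_cancel_left _ _ ((isUnit_iff_isUnit_det _).1 C.isUnit)⟩
  · rintro ⟨hu, rfl⟩
    refine ⟨hu.unit, ext_blocks ?_ ?_⟩
    · rw [leftBlock_mul, leftBlock_IdA, Matrix.mul_one, hu.unit_spec]
    · rw [rightBlock_mul, rightBlock_IdA, hu.unit_spec,
        mul_nonsing_inv_cancel_left _ _ ((isUnit_iff_isUnit_det _).1 hu)]

lemma rowEquiv_firstRows_iff {M : Matrix (Fin n) (Fin (2 * n)) ℝ}
    {M' : Matrix (Fin (2 * n)) (Fin n) ℝ} (h : M * M' = 1) :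
    RowEquiv M (firstRows n) ↔ rightBlock M = 0 := by
  constructor
  · rintro ⟨C, rfl⟩
    rw [rightBlock_mul, rightBlock_IdA, Matrix.mul_zero]
  · intro hr
    have hM : M = leftBlock M * firstRows n := ext_blocks
      (by rw [leftBlock_mul, leftBlock_IdA, Matrix.mul_one])
      (by rw [hr, rightBlock_mul, rightBlock_IdA, Matrix.mul_zero])
    have hunit : IsUnit (leftBlock M) := by
      refine IsUnit.of_mul_eq_one (firstRows n * M') ?_
      rw [← Matrix.mul_assoc, ← hM, h]
    exact ⟨hunit.unit, hM⟩

lemma IdA_mul_mul_eq_one (A : Matrix (Fin n) (Fin n) ℝ)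
    {g g' : Matrix (Fin (2 * n)) (Fin (2 * n)) ℝ} (h : g * g' = 1) :
    IdA A * g * (g' * (firstRows n)ᵀ) = 1 := by
  rw [Matrix.mul_assoc, ← Matrix.mul_assoc g, h, Matrix.one_mul, mul_transpose_firstRows,
    leftBlock_IdA]

end Blocks

section Parabolic

variable {n i : ℕ}

/-- The matrices preserving the span of the first `n` coordinate rows. -/
def parabolic (n : ℕ) : Submonoid (Matrix (Fin (2 * n)) (Fin (2 * n)) ℝ) where
  carrier := {g | RowEquiv (firstRows n * g) (firstRows n)}
  one_mem' := by simpa using RowEquiv.refl (firstRows n)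
  mul_mem' {g h} hg hh := by
    rw [Set.mem_ofPred_eq, ← Matrix.mul_assoc]
    exact (hg.mul_right h).trans hh

lemma rowEquiv_firstRows_mul {g : Matrix (Fin (2 * n)) (Fin (2 * n)) ℝ} (hg : g ∈ parabolic n)
    (h : Matrix (Fin (2 * n)) (Fin (2 * n)) ℝ) :
    RowEquiv (firstRows n * (g * h)) (firstRows n * h) := by
  rw [← Matrix.mul_assoc]
  exact RowEquiv.mul_right hg h

lemma mem_parabolic {g : Matrix (Fin (2 * n)) (Fin (2 * n)) ℝ} (hg : IsUnit g)
    (h : ∀ p q : Fin n, g (leftIdx p) (rightIdx q) = 0) : g ∈ parabolic n := by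
  obtain ⟨g', hg'⟩ := hg.exists_right_inv
  refine (rowEquiv_firstRows_iff (IdA_mul_mul_eq_one 0 hg')).2 ?_
  rw [firstRows_mul]
  ext p q
  exact h p q

lemma xMat_mem_parabolic (hi : 1 ≤ i) (hin : i < n) (t : ℝ) : xMat n i t ∈ parabolic n := by
  refine mem_parabolic (isUnit_xMat (by omega) hi hin.le t) fun p q => ?_
  simp only [xMat, of_apply, leftIdx, rightIdx, hin, if_true]
  split_ifs <;> first | omega | simp

lemma transpose_xMat_mem_parabolic (hn : 2 ≤ n) (hi : 1 ≤ i) (hin : i ≤ n) (t : ℝ) :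
    (xMat n i t)ᵀ ∈ parabolic n := by
  refine mem_parabolic ((isUnit_transpose _).2 (isUnit_xMat hn hi hin t)) fun p q => ?_
  simp only [transpose_apply, xMat, of_apply, leftIdx, rightIdx]
  split_ifs <;> first | omega | simp

lemma diagonal_mem_parabolic {d : Fin (2 * n) → ℝ} (hd : ∀ k, d k ≠ 0) :
    diagonal d ∈ parabolic n := by
  refine mem_parabolic ?_ fun p q => diagonal_apply_ne d ?_
  · rw [isUnit_diagonal, Pi.isUnit_iff]
    exact fun k => (hd k).isUnit
  · simp only [leftIdx, rightIdx, ne_eq, Fin.ext_iff]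
    omega

lemma lowerProd_subset_parabolic (hn : 2 ≤ n) {w : List ℕ} (hw : ∀ i ∈ w, 1 ≤ i ∧ i ≤ n) :
    lowerProd n (Set.Ioi 0) w ⊆ parabolic n := by
  refine list_prod_map_subset_submonoid fun i hi => ?_
  rintro _ ⟨t, -, d, -, hd, rfl⟩
  exact mul_mem (transpose_xMat_mem_parabolic hn (hw i hi).1 (hw i hi).2 t)
    (diagonal_mem_parabolic fun k => (hd k).ne')

lemma isUnit_leftBlock_of_transpose_mem_parabolic {g : Matrix (Fin (2 * n)) (Fin (2 * n)) ℝ}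
    (hg : gᵀ ∈ parabolic n) : IsUnit (leftBlock (firstRows n * g)) := by
  have hT : leftBlock (firstRows n * g) = (leftBlock (firstRows n * gᵀ))ᵀ := by
    rw [firstRows_mul, firstRows_mul]
    rfl
  rw [hT, isUnit_transpose]
  exact (rowEquiv_IdA_iff.1 hg).1

end Parabolic

section TotallyPositive

variable {n : ℕ}

lemma length_blocks_add {r : ℕ} (hr : 2 * r ≤ n) :
    (((List.range r).map fun m =>
      n :: (decRun (n - 2) (2 * m + 1) ++ decRun (n - 1) (2 * m + 2))).flatten).length +
        r * (2 * r + 1) = 2 * r * n := by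
  induction r with
  | zero => simp
  | succ r ih =>
    have ih := ih (by omega)
    obtain ⟨q, rfl⟩ := Nat.exists_eq_add_of_le' hr
    rw [List.range_succ, List.map_append, List.flatten_append, List.length_append,
      List.map_singleton, List.flatten_singleton, List.length_cons, List.length_append]
    have hfst : (decRun (q + 2 * (r + 1) - 2) (2 * r + 1)).length = q := by
      simp only [decRun, List.length_reverse, List.length_range']
      omega
    have hsnd : (decRun (q + 2 * (r + 1) - 1) (2 * r + 2)).length = q := by
      simp only [decRun, List.length_reverse, List.length_range']
      omega
    rw [hfst, hsnd]
    linear_combination ih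

lemma length_wordD (n : ℕ) : (wordD n).length = Npar n := by
  have hlen : (wordD n).length + n / 2 * (2 * (n / 2) + 1) = 2 * (n / 2) * n :=
    length_blocks_add (by omega)
  refine (Nat.div_eq_of_eq_mul_right two_pos ?_).symm
  rcases Nat.even_or_odd' n with ⟨k, hk | hk⟩ <;>
    rw [show n / 2 = k by omega] at hlen <;> generalize (wordD n).length = L at hlen ⊢
  · rcases k with _ | k
    · simp_all
    · subst hk
      rw [show 2 * (k + 1) - 1 = 2 * k + 1 by omega]
      nlinarith
  · subst hk
    rw [Nat.add_sub_cancel]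
    nlinarith

lemma transpose_prodX_mem_parabolic (hn : 2 ≤ n) (t : ℕ → ℝ) : (prodX n t)ᵀ ∈ parabolic n := by
  rw [prodX, transpose_list_prod]
  refine Submonoid.list_prod_mem _ fun g hg => ?_
  simp only [List.mem_reverse, List.map_map, List.mem_map, List.mem_range] at hg
  obtain ⟨k, hk, rfl⟩ := hg
  rw [← length_wordD] at hk
  obtain ⟨hi, hin⟩ := mem_wordD (n := n) (i := (wordD n).getD k 0) (by simp [hk])
  exact transpose_xMat_mem_parabolic hn hi hin (t k)

lemma rowEquiv_firstRows_mul_prodX (hn : 2 ≤ n) (t : ℕ → ℝ) :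
    RowEquiv (firstRows n * prodX n t) (IdA (Amat n t)) := by
  refine rowEquiv_IdA_iff.2
    ⟨isUnit_leftBlock_of_transpose_mem_parabolic (transpose_prodX_mem_parabolic hn t), ?_⟩
  rw [firstRows_mul]
  rfl

lemma mem_upperProd_wordD_iff {g : Matrix (Fin (2 * n)) (Fin (2 * n)) ℝ} {S : Set ℝ} :
    g ∈ upperProd n S (wordD n) ↔ ∃ t : ℕ → ℝ, (∀ k < Npar n, t k ∈ S) ∧ g = prodX n t := by
  rw [mem_upperProd_iff, length_wordD]
  rfl

open scoped Pointwise in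
lemma upperProd_wordFull (n : ℕ) (S : Set ℝ) : upperProd n S (wordFull n) =
    upperProd n S ((List.range n).map fun r => decRun r 1).flatten * upperProd n S (wordD n) :=
  upperProd_append n S _ _

lemma upperProd_staircase_subset_parabolic (n : ℕ) (S : Set ℝ) :
    upperProd n S ((List.range n).map fun r => decRun r 1).flatten ⊆ parabolic n := by
  refine list_prod_map_subset_submonoid fun i hi => ?_
  rintro _ ⟨t, -, rfl⟩
  exact xMat_mem_parabolic (mem_staircase hi).1 (mem_staircase hi).2 t

lemma exists_mem_Spos_rowEquiv (hn : 2 ≤ n) {u : Matrix (Fin (2 * n)) (Fin (2 * n)) ℝ}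
    (hu : u ∈ upperProd n (Set.Ioi 0) (wordFull n)) :
    ∃ A ∈ Spos n, RowEquiv (firstRows n * u) (IdA A) := by
  rw [upperProd_wordFull] at hu
  obtain ⟨a, ha, v, hv, rfl⟩ := hu
  obtain ⟨t, ht, rfl⟩ := mem_upperProd_wordD_iff.1 hv
  exact ⟨Amat n t, ⟨t, ht, rfl⟩,
    (rowEquiv_firstRows_mul (upperProd_staircase_subset_parabolic n _ ha) _).trans
      (rowEquiv_firstRows_mul_prodX hn t)⟩

lemma exists_rowEquiv_of_mem_Spos (hn : 2 ≤ n) {A : Matrix (Fin n) (Fin n) ℝ}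
    (hA : A ∈ Spos n) :
    ∃ u ∈ upperProd n (Set.Ioi 0) (wordFull n), RowEquiv (IdA A) (firstRows n * u) := by
  obtain ⟨t, ht, rfl⟩ := hA
  have ha : (((List.range n).map fun r => decRun r 1).flatten.map fun i => xMat n i 1).prod ∈
      upperProd n (Set.Ioi 0) ((List.range n).map fun r => decRun r 1).flatten :=
    list_prod_map_mem fun i => ⟨1, Set.mem_Ioi.2 one_pos, rfl⟩
  refine ⟨_, upperProd_wordFull n _ ▸ Set.mul_mem_mul ha (mem_upperProd_wordD_iff.2 ⟨t, ht, rfl⟩),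
    ((rowEquiv_firstRows_mul (upperProd_staircase_subset_parabolic n _ ha) _).trans
      (rowEquiv_firstRows_mul_prodX hn t)).symm⟩

end TotallyPositive

/-! ### Closedness and the limit `ε → 0` -/

section Continuity

variable {n : ℕ}

lemma continuous_xMat (n i : ℕ) : Continuous (xMat n i) := by
  have h : xMat n i = fun t => 1 + t • rootMat n i := funext (xMat_eq_one_add_smul n i)
  rw [h]
  fun_prop

lemma continuous_zeps (n : ℕ) : Continuous (zeps n) :=
  continuous_list_prod _ fun i _ => continuous_xMat n i

lemma zeps_zero (n : ℕ) : zeps n 0 = 1 := by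
  simp [zeps, xMat_zero]

lemma continuous_IdA : Continuous (IdA : Matrix (Fin n) (Fin n) ℝ → _) := by
  refine continuous_matrix fun p q => ?_
  simp only [IdA, of_apply]
  split_ifs
  · exact continuous_const
  · exact continuous_const
  · exact continuous_id.matrix_elem _ _

lemma isCompact_upperProd {S : Set ℝ} (hS : IsCompact S) (w : List ℕ) :
    IsCompact (upperProd n S w) := by
  induction w with
  | nil => exact isCompact_singleton
  | cons i w ih => exact (hS.image (continuous_xMat n i)).mul ih

lemma isUnit_of_mem_upperProd (hn : 2 ≤ n) {S : Set ℝ} {w : List ℕ}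
    (hw : ∀ i ∈ w, 1 ≤ i ∧ i ≤ n) {g : Matrix (Fin (2 * n)) (Fin (2 * n)) ℝ}
    (hg : g ∈ upperProd n S w) : IsUnit g := by
  refine list_prod_map_subset_submonoid (P := IsUnit.submonoid _) (fun i hi => ?_) hg
  rintro _ ⟨t, -, rfl⟩
  exact isUnit_xMat hn (hw i hi).1 (hw i hi).2 t

lemma tendsto_inv_Y1_mul_Y2 (A : Matrix (Fin n) (Fin n) ℝ) :
    Filter.Tendsto (fun ε => (Y1 A ε)⁻¹ * Y2 A ε) (nhds 0) (nhds A) := by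
  have hcont : Continuous fun ε => IdA A * Zeps n ε :=
    continuous_const.matrix_mul
      ((continuous_zeps n).matrix_transpose.matrix_mul (continuous_zeps n))
  have hzero : IdA A * Zeps n 0 = IdA A := by
    rw [Zeps, zeps_zero, transpose_one, Matrix.mul_one, Matrix.mul_one]
  have hY1 : Y1 A 0 = 1 := (congrArg leftBlock hzero).trans (leftBlock_IdA A)
  have hY2 : Y2 A 0 = A := (congrArg rightBlock hzero).trans (rightBlock_IdA A)
  have hY1cont : Continuous (Y1 A) := hcont.matrix_submatrix id leftIdx
  have hY2cont : Continuous (Y2 A) := hcont.matrix_submatrix id rightIdx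
  have hdet : ContinuousAt (fun ε => (Y1 A ε).det⁻¹) 0 :=
    hY1cont.matrix_det.continuousAt.inv₀ (by rw [hY1, det_one]; exact one_ne_zero)
  have hlim : ContinuousAt (fun ε => (Y1 A ε)⁻¹ * Y2 A ε) 0 := by
    simp only [inv_def, Ring.inverse_eq_inv']
    exact (hdet.smul hY1cont.matrix_adjugate.continuousAt).mul hY2cont.continuousAt
  simpa only [hY1, hY2, inv_one, Matrix.one_mul] using hlim.tendsto

end Continuity

section Closure

variable {n : ℕ}

lemma rowEquiv_firstRows_mul_iff {M : Matrix (Fin n) (Fin (2 * n)) ℝ}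
    {M' : Matrix (Fin (2 * n)) (Fin n) ℝ} (hM : M * M' = 1)
    {g : Matrix (Fin (2 * n)) (Fin (2 * n)) ℝ} (hg : IsUnit g) :
    RowEquiv M (firstRows n * g) ↔ rightBlock (M * g.adjugate) = 0 := by
  have hdet : IsUnit g.det := (isUnit_iff_isUnit_det g).1 hg
  have hinv : M * g⁻¹ * (g * M') = 1 := by
    rw [Matrix.mul_assoc, nonsing_inv_mul_cancel_left _ _ hdet, hM]
  have hright : rightBlock (M * g⁻¹) = g.det⁻¹ • rightBlock (M * g.adjugate) := by
    rw [inv_def, Ring.inverse_eq_inv', Matrix.mul_smul]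
    rfl
  have hmove : RowEquiv M (firstRows n * g) ↔ RowEquiv (M * g⁻¹) (firstRows n) := by
    constructor
    · intro h
      simpa only [mul_nonsing_inv_cancel_right _ _ hdet] using h.mul_right g⁻¹
    · intro h
      simpa only [nonsing_inv_mul_cancel_right _ _ hdet] using h.mul_right g
  rw [hmove, rowEquiv_firstRows_iff hinv, hright, smul_eq_zero_iff_right (inv_ne_zero hdet.ne_zero)]

lemma isClosed_setOf_exists_rowEquiv {G : Set (Matrix (Fin (2 * n)) (Fin (2 * n)) ℝ)}
    (hG : IsCompact G) (hGunit : ∀ g ∈ G, IsUnit g)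
    {h : Matrix (Fin (2 * n)) (Fin (2 * n)) ℝ} (hh : IsUnit h) :
    IsClosed {A : Matrix (Fin n) (Fin n) ℝ |
      ∃ g ∈ G, RowEquiv (IdA A * h) (firstRows n * g)} := by
  obtain ⟨h', hh'⟩ := hh.exists_right_inv
  have : CompactSpace G := isCompact_iff_compactSpace.1 hG
  let E : G × Matrix (Fin n) (Fin n) ℝ → Matrix (Fin n) (Fin n) ℝ := fun x =>
    rightBlock (IdA x.2 * h * (x.1 : Matrix (Fin (2 * n)) (Fin (2 * n)) ℝ).adjugate)
  have hE : Continuous E :=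
    (((continuous_IdA.comp continuous_snd).matrix_mul continuous_const).matrix_mul
      (continuous_subtype_val.comp continuous_fst).matrix_adjugate).matrix_submatrix id rightIdx
  have hproj : {A : Matrix (Fin n) (Fin n) ℝ |
      ∃ g ∈ G, RowEquiv (IdA A * h) (firstRows n * g)} = Prod.snd '' {x | E x = 0} := by
    ext A
    constructor
    · rintro ⟨g, hg, hA⟩
      exact ⟨(⟨g, hg⟩, A),
        (rowEquiv_firstRows_mul_iff (IdA_mul_mul_eq_one A hh') (hGunit g hg)).1 hA, rfl⟩
    · rintro ⟨⟨⟨g, hg⟩, A⟩, hA, rfl⟩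
      exact ⟨g, hg,
        (rowEquiv_firstRows_mul_iff (IdA_mul_mul_eq_one A hh') (hGunit g hg)).2 hA⟩
  rw [hproj]
  exact isClosedMap_snd_of_compactSpace _ (isClosed_eq hE continuous_const)

lemma exists_Spos_subset_setOf_rowEquiv (hn : 2 ≤ n) {ε : ℝ} (hε : 0 < ε) :
    ∃ L, Spos n ⊆ {A | ∃ g ∈ upperProd n (Set.Icc 0 L) (wordFull n),
      RowEquiv (IdA A * (zeps n ε)ᵀ) (firstRows n * g)} := by
  have hw : ∀ i ∈ wordFull n, 1 ≤ i ∧ i ≤ n := fun _ => mem_wordFull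
  have hwr : ∀ i ∈ (wordFull n).reverse, 1 ≤ i ∧ i ≤ n := fun i hi => hw i (List.mem_reverse.1 hi)
  let K := max 1 (max ε ε⁻¹)
  have hK : 1 ≤ K := le_max_left _ _
  have hεK : ε ∈ Set.Icc K⁻¹ K :=
    ⟨inv_le_of_inv_le₀ hε ((le_max_right _ _).trans (le_max_right _ _)),
      (le_max_left _ _).trans (le_max_right _ _)⟩
  obtain ⟨L, hL⟩ := exists_upperProd_mul_lowerProd_reverse_subset hn hw hK
  refine ⟨L, fun A hA => ?_⟩
  obtain ⟨u, hu, hAu⟩ := exists_rowEquiv_of_mem_Spos hn hA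
  have hz : (zeps n ε)ᵀ ∈ lowerProd n (Set.Icc K⁻¹ K) (wordFull n).reverse :=
    transpose_zeps_mem_lowerProd n hεK ⟨inv_le_one_of_one_le₀ hK, hK⟩
  obtain ⟨p, hp, g, hg, hpg : p * g = u * (zeps n ε)ᵀ⟩ := hL (Set.mul_mem_mul hu hz)
  refine ⟨g, hg, (hAu.mul_right _).trans ?_⟩
  rw [Matrix.mul_assoc, ← hpg]
  exact rowEquiv_firstRows_mul (lowerProd_subset_parabolic hn hwr hp) g

lemma exists_rowEquiv_of_mem_closure_Spos (hn : 2 ≤ n) {ε : ℝ} (hε : 0 < ε)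
    {A : Matrix (Fin n) (Fin n) ℝ} (hA : A ∈ closure (Spos n)) :
    ∃ g ∈ upperProd n (Set.Ici 0) (wordFull n),
      RowEquiv (IdA A * (zeps n ε)ᵀ) (firstRows n * g) := by
  have hunit : ∀ {S : Set ℝ} {g}, g ∈ upperProd n S (wordFull n) → IsUnit g :=
    isUnit_of_mem_upperProd hn fun _ => mem_wordFull
  obtain ⟨L, hL⟩ := exists_Spos_subset_setOf_rowEquiv hn hε
  have hz : IsUnit (zeps n ε)ᵀ :=
    (isUnit_transpose _).2 (hunit (zeps_mem_upperProd n (Set.mem_univ ε)))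
  have hclosed := isClosed_setOf_exists_rowEquiv
    (isCompact_upperProd (isCompact_Icc (a := (0 : ℝ)) (b := L)) (wordFull n)) (fun _ => hunit) hz
  obtain ⟨g, hg, hAg⟩ := closure_minimal hL hclosed hA
  exact ⟨g, upperProd_mono Set.Icc_subset_Ici_self _ hg, hAg⟩

lemma inv_Y1_mul_Y2_mem_Spos (hn : 2 ≤ n) {ε : ℝ} (hε : 0 < ε) {A : Matrix (Fin n) (Fin n) ℝ}
    (hA : A ∈ closure (Spos n)) : IsUnit (Y1 A ε) ∧ (Y1 A ε)⁻¹ * Y2 A ε ∈ Spos n := by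
  obtain ⟨g, hg, hAg⟩ := exists_rowEquiv_of_mem_closure_Spos hn hε hA
  have hgz : g * zeps n ε ∈ upperProd n (Set.Ioi 0) (wordFull n) :=
    upperProd_mul_upperProd_wordFull_subset hn (fun _ => mem_wordFull)
      (Set.mul_mem_mul hg (zeps_mem_upperProd n hε))
  obtain ⟨B, hB, hgB⟩ := exists_mem_Spos_rowEquiv hn hgz
  have hAB : RowEquiv (IdA A * Zeps n ε) (IdA B) := by
    refine .trans ?_ hgB
    rw [Zeps, ← Matrix.mul_assoc, ← Matrix.mul_assoc]
    exact hAg.mul_right _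
  obtain ⟨hunit, rfl⟩ := rowEquiv_IdA_iff.1 hAB
  exact ⟨hunit, hB⟩

end Closure

theorem mem_closure_Spos_iff_general (n : ℕ) (hn : 2 ≤ n) (A : Matrix (Fin n) (Fin n) ℝ) :
    A ∈ closure (Spos n) ↔
      ∃ ε₀ > (0 : ℝ), ∀ ε : ℝ, 0 < ε → ε < ε₀ →
        IsUnit (Y1 A ε) ∧ (Y1 A ε)⁻¹ * Y2 A ε ∈ Spos n := by
  constructor
  · exact fun hA => ⟨1, one_pos, fun ε hε _ => inv_Y1_mul_Y2_mem_Spos hn hε hA⟩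
  · rintro ⟨ε₀, hε₀, h⟩
    have hlim := (tendsto_inv_Y1_mul_Y2 A).mono_left (nhdsWithin_le_nhds (s := Set.Ioi 0))
    refine mem_closure_of_tendsto hlim ?_
    filter_upwards [Ioo_mem_nhdsGT hε₀] with ε hε
    exact (h ε hε.1 hε.2).2

/-- `A` is totally nonnegative (lies in the closure of `S_n^{>0}`) iff
for all sufficiently small `ε > 0`, with `[Y₁(ε)|Y₂(ε)] = [Id_n|A]·Z(ε)`, the matrix
`Y₁(ε)` is invertible and `Y₁(ε)⁻¹·Y₂(ε) ∈ S_n^{>0}`. -/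
theorem mem_closure_Spos_iff (n : ℕ) (hn : 2 ≤ n)
    (A : Matrix (Fin n) (Fin n) ℝ) (hA : Aᵀ = -A) :
    A ∈ closure (Spos n) ↔
      ∃ ε₀ > (0 : ℝ), ∀ ε : ℝ, 0 < ε → ε < ε₀ →
        IsUnit (Y1 A ε) ∧ (Y1 A ε)⁻¹ * Y2 A ε ∈ Spos n :=
  mem_closure_Spos_iff_general n hn A
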